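/- An element f ∈ ℍ^{gl_n} commutes with every element of ℍ^{gl_n} if and only if f is an F-linear combination of the operators Ỹ^m with m ∈ ℤ; that is, the centre of ℍ^{gl_n} is the subalgebra generated by Ỹ and Ỹ^{−1}. -/

import Mathlib

set_option maxHeartbeats 1000000
set_option synthInstance.maxHeartbeats 1000000

noncomputable section

/-- The Laurent polynomial ring `R[X₁^{±1}, …, Xₙ^{±1}]` in `n` variables over `R`,
realised as the monoid algebra of the additive monoid `Fin n →₀ ℤ` of exponent vectors. -/
abbrev Laur (R : Type*) [CommRing R] (n : ℕ) : Type _ :=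
  AddMonoidAlgebra R (Fin n →₀ ℤ)

variable {R : Type*} [CommRing R] {n : ℕ}

/-- The monomial `c · X^a`. -/
def mono (a : Fin n →₀ ℤ) (c : R) : Laur R n := AddMonoidAlgebra.single a c

/-- The generator `X_i`. -/
def Xel (i : Fin n) : Laur R n := mono (Finsupp.single i 1) 1

/-- The element `X_i⁻¹`. -/
def XinvEl (i : Fin n) : Laur R n := mono (Finsupp.single i (-1)) 1

/-- Multiplication by a Laurent polynomial, as a linear endomorphism. -/
def mulOp (x : Laur R n) : Module.End R (Laur R n) := LinearMap.mulLeft R x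

/-- The operator of multiplication by `X_i`, with `ℕ`-indexing (`0`-based; junk value `1`
out of range). -/
def XOp (i : ℕ) : Module.End R (Laur R n) :=
  if h : i < n then mulOp (Xel ⟨i, h⟩) else 1

/-- The operator of multiplication by `X_i⁻¹`, with `ℕ`-indexing. -/
def XinvOp (i : ℕ) : Module.End R (Laur R n) :=
  if h : i < n then mulOp (XinvEl ⟨i, h⟩) else 1

/-- Ascending product `f s * f (s+1) * ⋯ * f (s+len-1)` (equal to `1` when `len = 0`). -/
def aF {M : Type*} [Monoid M] (f : ℕ → M) (s len : ℕ) : M :=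
  ((List.range' s len).map f).prod

/-- Descending product `f (s+len-1) * ⋯ * f (s+1) * f s` (equal to `1` when `len = 0`). -/
def dF {M : Type*} [Monoid M] (f : ℕ → M) (s len : ℕ) : M :=
  (((List.range' s len).map f).reverse).prod

/-- Integer power `u^z`, where `v` is a designated (two-sided) inverse of `u`. -/
def zpowOp {M : Type*} [Monoid M] (u v : M) (z : ℤ) : M :=
  if 0 ≤ z then u ^ z.toNat else v ^ (-z).toNat

/-- The generating set of the algebra `ℍ^{gl_n}`: the operators `T_k`, `Y_i^{±1}`, and
`e_{ij}` for `i ≠ j` (all `0`-based). -/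
def HglSet {R : Type*} [CommRing R] {n : ℕ} (T Y Yi : ℕ → Module.End R (Laur R n))
    (e : ℕ → ℕ → Module.End R (Laur R n)) : Set (Module.End R (Laur R n)) :=
  {f | (∃ k, k + 1 < n ∧ f = T k) ∨ (∃ i, i < n ∧ f = Y i) ∨ (∃ i, i < n ∧ f = Yi i)
      ∨ (∃ i j, i < n ∧ j < n ∧ i ≠ j ∧ f = e i j)}

section BraidMonoid

variable {M : Type*} [Monoid M]

lemma aF_zero' (t : ℕ → M) (s : ℕ) : aF t s 0 = 1 := by simp [aF]
lemma aF_succL (t : ℕ → M) (s l : ℕ) : aF t s (l + 1) = t s * aF t (s + 1) l := by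
  simp [aF, List.range'_succ]
lemma aF_succR (t : ℕ → M) (s l : ℕ) : aF t s (l + 1) = aF t s l * t (s + l) := by
  simp [aF, List.range'_1_concat]
lemma dF_zero' (t : ℕ → M) (s : ℕ) : dF t s 0 = 1 := by simp [dF]
lemma dF_succL (t : ℕ → M) (s l : ℕ) : dF t s (l + 1) = t (s + l) * dF t s l := by
  simp [dF, List.range'_1_concat]

lemma aF_comm (t : ℕ → M) (x : M) (s l : ℕ)
    (h : ∀ k, s ≤ k → k < s + l → x * t k = t k * x) : x * aF t s l = aF t s l * x := by
  induction l with
  | zero => simp [aF_zero']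
  | succ l ih =>
    rw [aF_succR, ← mul_assoc, ih (fun k h1 h2 => h k h1 (by omega)), mul_assoc,
      h _ (by omega) (by omega), mul_assoc]

lemma aF_shift (t : ℕ → M) (N : ℕ)
    (hc : ∀ i j, i + 1 < j → j < N → t i * t j = t j * t i)
    (hb : ∀ i, i + 1 < N → t i * t (i + 1) * t i = t (i + 1) * t i * t (i + 1))
    (l : ℕ) : ∀ s k, s ≤ k → k + 1 < s + l → s + l ≤ N →
      aF t s l * t k = t (k + 1) * aF t s l := by
  induction l with
  | zero => intro s k h1 h2; omega
  | succ l ih =>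
    intro s k h1 h2 h3
    rcases Nat.eq_or_lt_of_le h1 with h | h
    · subst h
      obtain ⟨l, rfl⟩ : ∃ l', l = l' + 1 := ⟨l - 1, by omega⟩
      have e := aF_comm t (t s) (s + 1 + 1) l
        (fun k h4 h5 => hc _ _ (by omega) (by omega))
      have b := hb s (by omega)
      calc aF t s (l + 1 + 1) * t s
          = t s * t (s + 1) * (aF t (s + 1 + 1) l * t s) := by
            rw [aF_succL, aF_succL]; simp only [mul_assoc]
        _ = t s * t (s + 1) * t s * aF t (s + 1 + 1) l := by
            rw [← e]; simp only [mul_assoc]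
        _ = _ := by rw [b, aF_succL, aF_succL]; simp only [mul_assoc]
    · rw [aF_succL, mul_assoc, ih (s + 1) k (by omega) (by omega) (by omega), ← mul_assoc,
        hc s (k + 1) (by omega) (by omega), mul_assoc]

lemma aF_row (t : ℕ → M) (N : ℕ)
    (hc : ∀ i j, i + 1 < j → j < N → t i * t j = t j * t i)
    (hb : ∀ i, i + 1 < N → t i * t (i + 1) * t i = t (i + 1) * t i * t (i + 1))
    (s l : ℕ) (hl : s + l ≤ N) (j : ℕ) (hj : j < l) :
    aF t s l * aF t s j = aF t (s + 1) j * aF t s l := by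
  induction j with
  | zero => simp [aF_zero']
  | succ j ih =>
    rw [aF_succR t s j, ← mul_assoc, ih (by omega), mul_assoc,
      aF_shift t N hc hb l s (s + j) (by omega) (by omega) hl, aF_succR, ← mul_assoc]
    congr 3
    omega

/-- Product of rows. -/
def rowsP (t : ℕ → M) (m : ℕ) : ℕ → M
  | 0 => 1
  | i + 1 => aF t i m * rowsP t m i

lemma rowsP_comm (t : ℕ → M) (N : ℕ)
    (hc : ∀ i j, i + 1 < j → j < N → t i * t j = t j * t i) (m i j : ℕ) (hj : i + m ≤ j)
    (hN : j < N) : t j * rowsP t m i = rowsP t m i * t j := by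
  induction i with
  | zero => simp [rowsP]
  | succ i ih =>
    rw [rowsP, ← mul_assoc, aF_comm t (t j) i m
      (fun k h1 h2 => (hc k j (by omega) hN).symm), mul_assoc, ih (by omega), mul_assoc]

lemma rowsP_key (t : ℕ → M) (N : ℕ)
    (hc : ∀ i j, i + 1 < j → j < N → t i * t j = t j * t i)
    (hb : ∀ i, i + 1 < N → t i * t (i + 1) * t i = t (i + 1) * t i * t (i + 1))
    (m i : ℕ) (h : i + m ≤ N) :
    rowsP t (m + 1) i * aF t 0 m = rowsP t m (i + 1) * dF t m i := by
  induction i with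
  | zero => simp [rowsP, dF_zero']
  | succ i ih =>
    have r := aF_row t N hc hb i (m + 1) (by omega) m (by omega)
    have cm := rowsP_comm t N hc m i (i + m) (by omega) (by omega)
    calc rowsP t (m + 1) (i + 1) * aF t 0 m
        = aF t i (m + 1) * (rowsP t (m + 1) i * aF t 0 m) := by rw [rowsP, mul_assoc]
      _ = (aF t i (m + 1) * aF t i m) * rowsP t m i * dF t m i := by
          rw [ih (by omega), rowsP]; simp only [mul_assoc]
      _ = aF t (i + 1) m * aF t i m * (t (i + m) * rowsP t m i) * dF t m i := by
          rw [r, aF_succR t i m]; simp only [mul_assoc]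
      _ = _ := by
          rw [cm, dF_succL, rowsP, rowsP, add_comm m i]; simp only [mul_assoc]

lemma pow_comm_shift (t : ℕ → M) (N : ℕ) (p : M)
    (hp : ∀ k, k + 1 < N → p * t (k + 1) = t k * p) (i k : ℕ) (h : k + i < N) :
    p ^ i * t (k + i) = t k * p ^ i := by
  induction i with
  | zero => simp
  | succ i ih =>
    rw [pow_succ, mul_assoc, ← add_assoc, hp (k + i) (by omega), ← mul_assoc,
      ih (by omega), mul_assoc]

lemma dF_mul_aF (t ti : ℕ → M) (s i : ℕ) (h : ∀ k, k < s + i → t k * ti k = 1) :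
    dF t s i * aF ti s i = 1 := by
  induction i with
  | zero => simp [dF_zero', aF_zero']
  | succ i ih =>
    rw [dF_succL, aF_succR]
    calc t (s + i) * dF t s i * (aF ti s i * ti (s + i))
        = t (s + i) * (dF t s i * aF ti s i) * ti (s + i) := by simp only [mul_assoc]
      _ = 1 := by rw [ih (fun k hk => h k (by omega)), mul_one, h _ (by omega)]

lemma aF_mul_dF (t ti : ℕ → M) (s i : ℕ) (h : ∀ k, k < s + i → t k * ti k = 1) :
    aF t s i * dF ti s i = 1 := by
  induction i with
  | zero => simp [dF_zero', aF_zero']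
  | succ i ih =>
    rw [dF_succL, aF_succR]
    calc aF t s i * t (s + i) * (ti (s + i) * dF ti s i)
        = aF t s i * (t (s + i) * ti (s + i)) * dF ti s i := by simp only [mul_assoc]
      _ = 1 := by rw [h _ (by omega), mul_one, ih (fun k hk => h k (by omega))]

/-- The product `Y_0 ⋯ Y_{n-1}` equals `p ^ n`. -/
lemma prodY (n : ℕ) (hn : 0 < n) (t ti Y : ℕ → M) (p p' : M)
    (hc : ∀ i j, i + 1 < j → j < n - 1 → t i * t j = t j * t i)
    (hb : ∀ i, i + 1 < n - 1 → t i * t (i + 1) * t i = t (i + 1) * t i * t (i + 1))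
    (hti : ∀ k, k < n - 1 → t k * ti k = 1)
    (hp : ∀ k, k + 1 < n - 1 → p * t (k + 1) = t k * p) (hpp : p * p' = 1)
    (hpn : ∀ k, k < n - 1 → p ^ n * t k = t k * p ^ n)
    (hY : ∀ i, Y i = aF t i (n - 1 - i) * p * aF ti 0 i) :
    ((List.range n).map Y).prod = p ^ n := by
  have hpw : ∀ m, p ^ m * p' ^ m = 1 := by
    intro m
    induction m with
    | zero => simp
    | succ m ih =>
      rw [pow_succ, pow_succ' p']
      calc p ^ m * p * (p' * p' ^ m) = p ^ m * (p * p') * p' ^ m := by simp only [mul_assoc]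
        _ = 1 := by rw [hpp, mul_one, ih]
  have claim : ∀ i, i ≤ n → ((List.range i).map Y).prod = rowsP t (n - i) i * p ^ i := by
    intro i
    induction i with
    | zero => intro _; simp [rowsP]
    | succ i ih =>
      intro hi
      obtain ⟨m, hm⟩ : ∃ m, n = m + 1 + i := ⟨n - 1 - i, by omega⟩
      have e1 : n - 1 - i = m := by omega
      have e2 : n - i = m + 1 := by omega
      have e3 : n - (i + 1) = m := by omega
      have h1 : p ^ i * aF t i m = aF t 0 m * p ^ i := by
        have : ∀ l, l ≤ m → p ^ i * aF t i l = aF t 0 l * p ^ i := by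
          intro l
          induction l with
          | zero => intro _; simp [aF_zero']
          | succ l ihl =>
            intro hl
            rw [aF_succR, aF_succR, ← mul_assoc, ihl (by omega), mul_assoc, add_comm i l,
              pow_comm_shift t (n - 1) p hp i l (by omega), zero_add, mul_assoc]
        exact this m le_rfl
      have h2 : ∀ j, j < i → p ^ (i + 1) * t j = t (m + j) * p ^ (i + 1) := by
        intro j hj
        have a1 := pow_comm_shift t (n - 1) p hp m j (by omega)
        have a2 := hpn (m + j) (by omega)
        have a3 : p ^ (i + 1) * t j * p ^ m = t (m + j) * p ^ (i + 1) * p ^ m := by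
          rw [mul_assoc, ← a1, ← mul_assoc, ← pow_add, mul_assoc, ← pow_add, add_comm j m]
          have : i + 1 + m = n := by omega
          rw [this, a2]
        have := congrArg (· * p' ^ m) a3
        simpa only [mul_assoc, hpw, mul_one] using this
      have h3 : dF t m i * p ^ (i + 1) = p ^ (i + 1) * dF t 0 i := by
        have : ∀ l, l ≤ i → dF t m l * p ^ (i + 1) = p ^ (i + 1) * dF t 0 l := by
          intro l
          induction l with
          | zero => intro _; simp [dF_zero']
          | succ l ihl =>
            intro hl
            rw [dF_succL, dF_succL, mul_assoc, ihl (by omega), ← mul_assoc, ← mul_assoc,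
              zero_add, h2 l (by omega)]
        exact this i le_rfl
      have h4 := dF_mul_aF t ti 0 i (fun k hk => hti k (by omega))
      have h5 := rowsP_key t (n - 1) hc hb m i (by omega)
      rw [List.range_succ, List.map_append, List.prod_append, ih (by omega)]
      simp only [List.map_cons, List.map_nil, List.prod_cons, List.prod_nil, mul_one]
      rw [hY, e1, e2, e3]
      calc rowsP t (m + 1) i * p ^ i * (aF t i m * p * aF ti 0 i)
          = rowsP t (m + 1) i * (p ^ i * aF t i m) * p * aF ti 0 i := by
            simp only [mul_assoc]
        _ = (rowsP t (m + 1) i * aF t 0 m) * (p ^ i * p) * aF ti 0 i := by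
            rw [h1]; simp only [mul_assoc]
        _ = rowsP t m (i + 1) * (dF t m i * p ^ (i + 1)) * aF ti 0 i := by
            rw [h5, ← pow_succ]; simp only [mul_assoc]
        _ = rowsP t m (i + 1) * p ^ (i + 1) * (dF t 0 i * aF ti 0 i) := by
            rw [h3]; simp only [mul_assoc]
        _ = _ := by rw [h4, mul_one]
  have h0 : rowsP t 0 n = 1 := by
    have : ∀ i, rowsP t 0 i = 1 := by
      intro i
      induction i with
      | zero => rfl
      | succ i ih => rw [rowsP, ih, aF_zero', one_mul]
    exact this n
  rw [claim n le_rfl, Nat.sub_self, h0, one_mul]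

lemma prodYi (n : ℕ) (Y Yi : ℕ → M) (h : ∀ i, i < n → Y i * Yi i = 1 ∧ Yi i * Y i = 1) :
    ((List.range n).map Y).prod * (((List.range n).map Yi).reverse).prod = 1 := by
  induction n with
  | zero => simp
  | succ n ih =>
    rw [List.range_succ]
    simp only [List.map_append, List.prod_append, List.reverse_append, List.map_cons,
      List.map_nil, List.prod_cons, List.prod_nil, mul_one, List.reverse_cons, List.reverse_nil,
      List.nil_append]
    calc _ = ((List.range n).map Y).prod * (Y n * Yi n)
          * (((List.range n).map Yi).reverse).prod := by simp only [mul_assoc]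
      _ = 1 := by rw [(h n (by omega)).1, mul_one, ih (fun i hi => h i (by omega))]

end BraidMonoid

/-- The data of the statement, over a general field. -/
structure Cx (F : Type*) [Field F] (n : ℕ) [NeZero n] where
  q : F
  t : F
  hq : q ≠ 0
  hqr : ∀ m : ℤ, q ^ m = 1 → m = 0
  ht : t ≠ 0
  W : Equiv.Perm (Fin n) → Module.End F (Laur F n)
  hW : ∀ (w : Equiv.Perm (Fin n)) (v : Fin n →₀ ℤ) (r : F),
      W w (mono v r) = mono (Finsupp.equivMapDomain w v) r
  T : ℕ → Module.End F (Laur F n)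
  Ti : ℕ → Module.End F (Laur F n)
  hT : ∀ (k : ℕ) (hk : k + 1 < n) (p : Laur F n),
      (Xel ⟨k + 1, hk⟩ - Xel ⟨k, Nat.lt_of_succ_lt hk⟩) * T k p
        = (t⁻¹ • Xel ⟨k + 1, hk⟩ - t • Xel ⟨k, Nat.lt_of_succ_lt hk⟩)
            * W (Equiv.swap ⟨k, Nat.lt_of_succ_lt hk⟩ ⟨k + 1, hk⟩) p
          + (t - t⁻¹) • (Xel ⟨k + 1, hk⟩ * p)
  hTi : ∀ k, Ti k = T k + (t⁻¹ - t) • (1 : Module.End F (Laur F n))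
  hTinv : ∀ k, k + 1 < n → T k * Ti k = 1 ∧ Ti k * T k = 1
  piInv : Module.End F (Laur F n)
  hpiInv : ∀ (v : Fin n →₀ ℤ) (r : F),
      piInv (mono v r) = q ^ (v 0) • mono (Finsupp.equivMapDomain (finRotate n).symm v) r
  Y : ℕ → Module.End F (Laur F n)
  Yi : ℕ → Module.End F (Laur F n)
  hY : ∀ i, Y i = aF T i (n - 1 - i) * piInv * aF Ti 0 i
  hYinv : ∀ i, i < n → Y i * Yi i = 1 ∧ Yi i * Y i = 1

section MonoLemmas

variable {F : Type*} [Field F] {n : ℕ}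

lemma mono_mul (a b : Fin n →₀ ℤ) (r s : F) :
    mono a r * mono b s = mono (a + b) (r * s) :=
  AddMonoidAlgebra.single_mul_single ..

lemma mono_zero_one : (mono 0 1 : Laur F n) = 1 := rfl

lemma mono_pow (a : Fin n →₀ ℤ) (r : F) (m : ℕ) : mono a r ^ m = mono (m • a) (r ^ m) :=
  AddMonoidAlgebra.single_pow ..

lemma smul_mono (a : Fin n →₀ ℤ) (r s : F) : s • mono a r = mono a (s * r) :=
  AddMonoidAlgebra.smul_single' ..

lemma mono_eq_smul (a : Fin n →₀ ℤ) (r : F) : mono a r = r • mono a 1 := by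
  rw [smul_mono, mul_one]

lemma mono_ne_zero (a : Fin n →₀ ℤ) (r : F) (hr : r ≠ 0) : mono a r ≠ 0 :=
  AddMonoidAlgebra.single_ne_zero.2 hr

lemma mono_inj {a b : Fin n →₀ ℤ} {r s : F} (hr : r ≠ 0) (h : mono a r = mono b s) :
    a = b ∧ r = s := by
  rcases AddMonoidAlgebra.single_inj.1 h with h | h
  · exact h
  · exact absurd h.1 hr

lemma laur_induction {motive : Laur F n → Prop} (x : Laur F n) (zero : motive 0)
    (add : ∀ x y, motive x → motive y → motive (x + y))
    (single : ∀ a r, motive (mono a r)) : motive x :=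
  AddMonoidAlgebra.induction_linear x zero add single

lemma laur_ext {V : Type*} [AddCommGroup V] [Module F V] {f g : Laur F n →ₗ[F] V}
    (h : ∀ a, f (mono a 1) = g (mono a 1)) : f = g := by
  apply LinearMap.ext
  intro x
  induction x using laur_induction with
  | zero => simp
  | add x y hx hy => simp [hx, hy]
  | single a r => rw [mono_eq_smul, map_smul, map_smul, h]

lemma laur_map_mul (f : Module.End F (Laur F n))
    (h : ∀ a b, f (mono (a + b) 1) = f (mono a 1) * f (mono b 1)) (x y : Laur F n) :
    f (x * y) = f x * f y := by
  induction x using laur_induction with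
  | zero => simp
  | add x x' hx hx' => simp [add_mul, hx, hx']
  | single a r =>
    induction y using laur_induction with
    | zero => simp
    | add y y' hy hy' => simp [mul_add, hy, hy']
    | single b s =>
      rw [mono_mul, mono_eq_smul, mono_eq_smul a r, mono_eq_smul b s, map_smul, map_smul,
        map_smul, h, smul_mul_smul_comm]

lemma equivMapDomain_add' (w : Equiv.Perm (Fin n)) (a b : Fin n →₀ ℤ) :
    Finsupp.equivMapDomain w (a + b)
      = Finsupp.equivMapDomain w a + Finsupp.equivMapDomain w b := by
  ext i; simp [Finsupp.equivMapDomain_apply]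

lemma equivMapDomain_zero' (w : Equiv.Perm (Fin n)) :
    Finsupp.equivMapDomain w (0 : Fin n →₀ ℤ) = 0 := by
  ext i; simp [Finsupp.equivMapDomain_apply]

lemma mulOp_apply (x p : Laur F n) : mulOp x p = x * p := rfl

/-- `X_k` with natural index. -/
def xx (k : ℕ) : Laur F n := if h : k < n then Xel ⟨k, h⟩ else 1

lemma xx_of_lt {k : ℕ} (h : k < n) : (xx k : Laur F n) = Xel ⟨k, h⟩ := dif_pos h

lemma xx_ne_zero (k : ℕ) : (xx k : Laur F n) ≠ 0 := by
  unfold xx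
  split_ifs
  · exact mono_ne_zero _ _ one_ne_zero
  · exact one_ne_zero

lemma comb_ne_zero {j k : ℕ} (hj : j < n) (hk : k < n) (hjk : j ≠ k) (r s : F) (hr : r ≠ 0) :
    r • (xx j : Laur F n) - s • xx k ≠ 0 := by
  rw [xx_of_lt hj, xx_of_lt hk, Xel, Xel]
  intro h
  have h2 := congrArg (fun p : Laur F n => p.coeff (Finsupp.single ⟨j, hj⟩ 1)) h
  have h3 : (Finsupp.single (⟨k, hk⟩ : Fin n) (1 : ℤ)) ≠ Finsupp.single ⟨j, hj⟩ 1 := by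
    intro h4
    have := (Finsupp.single_left_inj (one_ne_zero (α := ℤ))).1 h4
    simp only [Fin.mk.injEq] at this
    exact hjk this.symm
  simp [mono, h3, hr] at h2

lemma xx_sub_ne_zero {j k : ℕ} (hj : j < n) (hk : k < n) (hjk : j ≠ k) :
    (xx j : Laur F n) - xx k ≠ 0 := by
  have := comb_ne_zero hj hk hjk (1 : F) 1 one_ne_zero
  simpa using this

lemma xx_inj {j k : ℕ} (hj : j < n) (hk : k < n) (hjk : j ≠ k) :
    (xx j : Laur F n) ≠ xx k := fun h => xx_sub_ne_zero hj hk hjk (sub_eq_zero.2 h)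

end MonoLemmas

namespace Cx

variable {F : Type*} [Field F] {n : ℕ} [NeZero n] (c : Cx F n)

lemma W_mul (w : Equiv.Perm (Fin n)) (x y : Laur F n) :
    c.W w (x * y) = c.W w x * c.W w y := by
  apply laur_map_mul
  intro a b
  rw [c.hW, c.hW, c.hW, equivMapDomain_add', mono_mul, one_mul]

lemma W_one (w : Equiv.Perm (Fin n)) : c.W w 1 = 1 := by
  rw [← mono_zero_one, c.hW, equivMapDomain_zero']

lemma W_comp (w w' : Equiv.Perm (Fin n)) : c.W w * c.W w' = c.W (w * w') := by
  apply laur_ext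
  intro a
  rw [Module.End.mul_apply, c.hW, c.hW, c.hW]
  congr 1
  ext i
  simp only [Finsupp.equivMapDomain_apply]
  rfl

lemma W_refl : c.W 1 = 1 := by
  apply laur_ext
  intro a
  rw [c.hW, Module.End.one_apply]
  congr 1
  ext i
  simp only [Finsupp.equivMapDomain_apply]
  rfl

/-- `W w` as an algebra automorphism. -/
def WA (w : Equiv.Perm (Fin n)) : Laur F n ≃ₐ[F] Laur F n :=
  AlgEquiv.ofBijective (AlgHom.ofLinearMap (c.W w) (c.W_one w) (c.W_mul w)) (by
    constructor
    · apply Function.LeftInverse.injective (g := c.W w⁻¹)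
      intro x
      change (c.W w⁻¹ * c.W w) x = x
      rw [W_comp, inv_mul_cancel, W_refl]; rfl
    · apply Function.RightInverse.surjective (g := c.W w⁻¹)
      intro x
      change (c.W w * c.W w⁻¹) x = x
      rw [W_comp, mul_inv_cancel, W_refl]; rfl)

lemma WA_apply (w : Equiv.Perm (Fin n)) (x : Laur F n) : c.WA w x = c.W w x := rfl

lemma pi_mul (x y : Laur F n) : c.piInv (x * y) = c.piInv x * c.piInv y := by
  apply laur_map_mul
  intro a b
  rw [c.hpiInv, c.hpiInv, c.hpiInv, equivMapDomain_add', smul_mul_smul_comm, mono_mul, one_mul,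
    Finsupp.add_apply, zpow_add₀ c.hq]

lemma pi_one : c.piInv 1 = 1 := by
  rw [← mono_zero_one, c.hpiInv, equivMapDomain_zero']; simp

/-- The inverse of `piInv`. -/
def pi : Module.End F (Laur F n) := c.Yi 0 * aF c.T 0 (n - 1)

lemma Y_zero : c.Y 0 = aF c.T 0 (n - 1) * c.piInv := by
  rw [c.hY, aF_zero', mul_one, Nat.sub_zero]

lemma pi_piInv : c.pi * c.piInv = 1 := by
  rw [pi, mul_assoc, ← Y_zero, (c.hYinv 0 (NeZero.pos n)).2]

lemma piInv_pi : c.piInv * c.pi = 1 := by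
  have h1 := dF_mul_aF c.Ti c.T 0 (n - 1) (fun k hk => (c.hTinv k (by omega)).2)
  have h2 := (c.hYinv 0 (NeZero.pos n)).1
  rw [Y_zero] at h2
  calc c.piInv * c.pi
      = dF c.Ti 0 (n - 1) * aF c.T 0 (n - 1) * (c.piInv * c.pi) := by rw [h1, one_mul]
    _ = dF c.Ti 0 (n - 1) * (aF c.T 0 (n - 1) * c.piInv * c.Yi 0) * aF c.T 0 (n - 1) := by
        rw [pi]; simp only [mul_assoc]
    _ = 1 := by rw [h2, mul_one, h1]

/-- `piInv` as an algebra automorphism. -/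
def piA : Laur F n ≃ₐ[F] Laur F n :=
  AlgEquiv.ofBijective (AlgHom.ofLinearMap c.piInv c.pi_one c.pi_mul) (by
    constructor
    · apply Function.LeftInverse.injective (g := c.pi)
      intro x
      change (c.pi * c.piInv) x = x
      rw [pi_piInv]; rfl
    · apply Function.RightInverse.surjective (g := c.pi)
      intro x
      change (c.piInv * c.pi) x = x
      rw [piInv_pi]; rfl)

lemma piA_apply (x : Laur F n) : c.piA x = c.piInv x := rfl

lemma piA_symm_apply (x : Laur F n) : c.piA.symm x = c.pi x := by
  rw [AlgEquiv.symm_apply_eq, piA_apply]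
  change x = (c.piInv * c.pi) x
  rw [piInv_pi]; rfl

/-- The transposition automorphism with natural index. -/
def s (k : ℕ) : Laur F n ≃ₐ[F] Laur F n :=
  if h : k + 1 < n then c.WA (Equiv.swap ⟨k, Nat.lt_of_succ_lt h⟩ ⟨k + 1, h⟩) else AlgEquiv.refl

lemma s_of_lt {k : ℕ} (h : k + 1 < n) :
    c.s k = c.WA (Equiv.swap ⟨k, Nat.lt_of_succ_lt h⟩ ⟨k + 1, h⟩) := dif_pos h

lemma hT' {k : ℕ} (hk : k + 1 < n) (p : Laur F n) :
    (xx (k + 1) - xx k) * c.T k p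
      = (c.t⁻¹ • xx (k + 1) - c.t • xx k) * c.s k p + (c.t - c.t⁻¹) • (xx (k + 1) * p) := by
  have := c.hT k hk p
  rw [xx_of_lt hk, xx_of_lt (Nat.lt_of_succ_lt hk), s_of_lt c hk]
  exact this

lemma W_X (w : Equiv.Perm (Fin n)) (i : Fin n) : c.W w (Xel i) = Xel (w i) := by
  rw [Xel, c.hW, Finsupp.equivMapDomain_single]; rfl

lemma s_xx_left {k : ℕ} (hk : k + 1 < n) : c.s k (xx k) = xx (k + 1) := by
  rw [s_of_lt c hk, WA_apply, xx_of_lt (Nat.lt_of_succ_lt hk), W_X, Equiv.swap_apply_left,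
    xx_of_lt]

lemma s_xx_right {k : ℕ} (hk : k + 1 < n) : c.s k (xx (k + 1)) = xx k := by
  rw [s_of_lt c hk, WA_apply, xx_of_lt hk, W_X, Equiv.swap_apply_right,
    xx_of_lt]

lemma s_xx_ne {k j : ℕ} (hk : k + 1 < n) (hj : j < n) (h1 : j ≠ k) (h2 : j ≠ k + 1) :
    c.s k (xx j) = xx j := by
  rw [s_of_lt c hk, WA_apply, xx_of_lt hj, W_X, Equiv.swap_apply_of_ne_of_ne]
  · simpa using h1
  · simpa using h2

lemma s_s (k : ℕ) (p : Laur F n) : c.s k (c.s k p) = p := by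
  by_cases hk : k + 1 < n
  · rw [s_of_lt c hk, WA_apply, WA_apply]
    change (c.W _ * c.W _) p = p
    rw [W_comp, Equiv.swap_mul_self, W_refl]; rfl
  · simp [s, hk]

lemma s_comm {j k : ℕ} (hjk : j + 1 < k) (hk : k + 1 < n) (p : Laur F n) :
    c.s j (c.s k p) = c.s k (c.s j p) := by
  rw [s_of_lt c hk, s_of_lt c (show j + 1 < n by omega)]
  simp only [WA_apply]
  change (c.W _ * c.W _) p = (c.W _ * c.W _) p
  rw [W_comp, W_comp]
  congr 2
  apply (Equiv.Perm.Disjoint.commute _).eq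
  rw [Equiv.Perm.disjoint_iff_disjoint_support, Equiv.Perm.support_swap, Equiv.Perm.support_swap]
  · simp [Finset.disjoint_left]; omega
  · simp
  · simp

lemma s_braid {k : ℕ} (hk : k + 2 < n) (p : Laur F n) :
    c.s (k + 1) (c.s k (c.s (k + 1) p)) = c.s k (c.s (k + 1) (c.s k p)) := by
  rw [s_of_lt c (show k + 1 + 1 < n from hk), s_of_lt c (show k + 1 < n by omega)]
  simp only [WA_apply]
  change (c.W _ * (c.W _ * c.W _)) p = (c.W _ * (c.W _ * c.W _)) p
  simp only [W_comp]
  congr 2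
  rw [← mul_assoc, ← mul_assoc]
  have e1 : (⟨k, by omega⟩ : Fin n) ≠ ⟨k + 1, by omega⟩ := by simp
  have e2 : (⟨k, by omega⟩ : Fin n) ≠ ⟨k + 1 + 1, by omega⟩ := by simp; try omega
  have e3 : (⟨k + 1, by omega⟩ : Fin n) ≠ ⟨k + 1 + 1, by omega⟩ := by simp; try omega
  generalize (⟨k, by omega⟩ : Fin n) = a at *
  generalize (⟨k + 1, by omega⟩ : Fin n) = b at *
  generalize (⟨k + 1 + 1, by omega⟩ : Fin n) = d at *
  ext x
  simp only [Equiv.Perm.mul_apply, Equiv.swap_apply_def]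
  grind

end Cx

namespace Cx

/-- The fraction field. -/
abbrev K (F : Type*) [Field F] (n : ℕ) := FractionRing (Laur F n)

/-- The embedding of Laurent polynomials in the fraction field. -/
abbrev io (F : Type*) [Field F] (n : ℕ) : Laur F n →ₐ[F] K F n :=
  IsScalarTower.toAlgHom F (Laur F n) (K F n)

lemma io_inj {F : Type*} [Field F] {n : ℕ} : Function.Injective (io F n) :=
  IsFractionRing.injective (Laur F n) (K F n)

variable {F : Type*} [Field F] {n : ℕ} [NeZero n] (c : Cx F n)

lemma T_symm {k : ℕ} (hk : k + 1 < n) (g p : Laur F n) (hg : c.s k g = g) :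
    c.T k (g * p) = g * c.T k p := by
  apply mul_left_cancel₀ (xx_sub_ne_zero (F := F) hk (Nat.lt_of_succ_lt hk) (by omega))
  rw [c.hT' hk, map_mul, hg, mul_left_comm (_ - _) g (c.T k p), c.hT' hk]
  simp only [Algebra.smul_def]
  ring

lemma T_intertw {j k : ℕ} (hj : j + 1 < n) (hk : k + 1 < n) (σ : Laur F n ≃ₐ[F] Laur F n)
    (u : F) (hu : u ≠ 0) (h1 : σ (xx k) = u • xx j) (h2 : σ (xx (k + 1)) = u • xx (j + 1))
    (h3 : ∀ p, σ (c.s k p) = c.s j (σ p)) (p : Laur F n) : σ (c.T k p) = c.T j (σ p) := by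
  apply mul_left_cancel₀ (xx_sub_ne_zero (F := F) hj (Nat.lt_of_succ_lt hj) (by omega))
  rw [c.hT' hj]
  have := congrArg σ (c.hT' hk p)
  simp only [map_mul, map_sub, map_add, map_smul, h1, h2, h3] at this
  rw [← smul_sub, smul_mul_assoc] at this
  apply smul_right_injective _ hu
  simp only
  rw [this]
  simp only [Algebra.smul_def]
  ring

/-- First coefficient of the Demazure-Lusztig operator. -/
def cA (t : F) (a b : K F n) : K F n :=
  (algebraMap F (K F n) t⁻¹ * b - algebraMap F (K F n) t * a) / (b - a)

/-- Second coefficient of the Demazure-Lusztig operator. -/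
def cB (t : F) (a b : K F n) : K F n :=
  (algebraMap F (K F n) t - algebraMap F (K F n) t⁻¹) * b / (b - a)

lemma io_T {k : ℕ} (hk : k + 1 < n) (σ : Laur F n ≃ₐ[F] Laur F n) (p : Laur F n) :
    io F n (σ (c.T k p)) = cA c.t (io F n (σ (xx k))) (io F n (σ (xx (k + 1))))
        * io F n (σ (c.s k p))
      + cB c.t (io F n (σ (xx k))) (io F n (σ (xx (k + 1)))) * io F n (σ p) := by
  have h0 : io F n (σ (xx (k + 1))) - io F n (σ (xx k)) ≠ 0 := by
    intro h
    rw [← map_sub, ← map_sub] at h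
    have h1 := (map_eq_zero_iff _ io_inj).1 h
    have h2 := (map_eq_zero_iff _ σ.injective).1 h1
    exact xx_sub_ne_zero (F := F) hk (Nat.lt_of_succ_lt hk) (by omega) h2
  have := congrArg (fun y => io F n (σ y)) (c.hT' hk p)
  simp only [map_mul, map_sub, map_add, map_smul] at this
  rw [cA, cB]
  field_simp
  rw [mul_comm, this]
  simp only [Algebra.smul_def]
  simp only [map_sub]
  ring

lemma io_T0 {k : ℕ} (hk : k + 1 < n) (p : Laur F n) :
    io F n (c.T k p) = cA c.t (io F n (xx k)) (io F n (xx (k + 1))) * io F n (c.s k p)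
      + cB c.t (io F n (xx k)) (io F n (xx (k + 1))) * io F n p :=
  c.io_T hk AlgEquiv.refl p

lemma io_T1 {k : ℕ} (hk : k + 1 < n) (i : ℕ) (p : Laur F n) :
    io F n (c.s i (c.T k p))
      = cA c.t (io F n (c.s i (xx k))) (io F n (c.s i (xx (k + 1)))) * io F n (c.s i (c.s k p))
      + cB c.t (io F n (c.s i (xx k))) (io F n (c.s i (xx (k + 1)))) * io F n (c.s i p) :=
  c.io_T hk (c.s i) p

lemma io_T2 {k : ℕ} (hk : k + 1 < n) (i j : ℕ) (p : Laur F n) :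
    io F n (c.s i (c.s j (c.T k p)))
      = cA c.t (io F n (c.s i (c.s j (xx k)))) (io F n (c.s i (c.s j (xx (k + 1)))))
          * io F n (c.s i (c.s j (c.s k p)))
      + cB c.t (io F n (c.s i (c.s j (xx k)))) (io F n (c.s i (c.s j (xx (k + 1)))))
          * io F n (c.s i (c.s j p)) :=
  c.io_T hk ((c.s j).trans (c.s i)) p

lemma T_comm {j k : ℕ} (hjk : j + 1 < k) (hk : k + 1 < n) : c.T j * c.T k = c.T k * c.T j := by
  apply LinearMap.ext
  intro p
  apply io_inj
  have hj : j + 1 < n := by omega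
  simp only [Module.End.mul_apply, c.io_T0 hk, c.io_T0 hj, c.io_T1 hk, c.io_T1 hj]
  rw [c.s_xx_ne hk (j := j) (by omega) (by omega) (by omega),
    c.s_xx_ne hk (j := j + 1) (by omega) (by omega) (by omega),
    c.s_xx_ne hj (j := k) (by omega) (by omega) (by omega),
    c.s_xx_ne hj (j := k + 1) (by omega) (by omega) (by omega), c.s_comm hjk hk]
  ring

lemma T_braid {k : ℕ} (hk : k + 2 < n) :
    c.T k * c.T (k + 1) * c.T k = c.T (k + 1) * c.T k * c.T (k + 1) := by
  apply LinearMap.ext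
  intro p
  apply io_inj
  have h1 : k + 1 < n := by omega
  have h2 : k + 1 + 1 < n := by omega
  simp only [Module.End.mul_apply]
  simp only [c.io_T0 h1, c.io_T0 h2, c.io_T1 h1, c.io_T1 h2, c.io_T2 h1, c.io_T2 h2]
  simp only [c.s_s, c.s_braid hk]
  have e1 := c.s_xx_left h1
  have e2 := c.s_xx_right h1
  have e3 := c.s_xx_ne h1 (j := k + 1 + 1) (by omega) (by omega) (by omega)
  have e4 := c.s_xx_left h2
  have e5 := c.s_xx_right h2
  have e6 := c.s_xx_ne h2 (j := k) (by omega) (by omega) (by omega)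
  simp only [e1, e2, e3, e4, e5, e6]
  have n1 : io F n (xx (k + 1)) - io F n (xx k) ≠ 0 := sub_ne_zero.2
    fun h => xx_inj (F := F) h1 (by omega) (by omega) (io_inj h)
  have n2 : io F n (xx (k + 1 + 1)) - io F n (xx k) ≠ 0 := sub_ne_zero.2
    fun h => xx_inj (F := F) h2 (by omega) (by omega) (io_inj h)
  have n3 : io F n (xx (k + 1 + 1)) - io F n (xx (k + 1)) ≠ 0 := sub_ne_zero.2
    fun h => xx_inj (F := F) h2 (by omega) (by omega) (io_inj h)
  have m1 : io F n (xx k) - io F n (xx (k + 1)) ≠ 0 := by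
    rw [← neg_sub]; exact neg_ne_zero.2 n1
  simp only [cA, cB]
  generalize io F n (xx k) = x at *
  generalize io F n (xx (k + 1)) = y at *
  generalize io F n (xx (k + 1 + 1)) = z at *
  generalize io F n p = p0
  generalize io F n (c.s k p) = p1
  generalize io F n (c.s (k + 1) p) = p2
  generalize io F n (c.s k (c.s (k + 1) p)) = p12
  generalize io F n (c.s (k + 1) (c.s k p)) = p21
  generalize io F n (c.s k (c.s (k + 1) (c.s k p))) = p121
  have ht : algebraMap F (K F n) c.t⁻¹ * algebraMap F (K F n) c.t = 1 := by
    rw [← map_mul, inv_mul_cancel₀ c.ht, map_one]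
  generalize algebraMap F (K F n) c.t⁻¹ = t' at *
  generalize algebraMap F (K F n) c.t = t at *
  clear ht m1
  rw [← neg_sub y x, ← neg_sub z y]
  have m1 := neg_ne_zero.2 n1
  have m2 := neg_ne_zero.2 n2
  have m3 := neg_ne_zero.2 n3
  field_simp
  ring

end Cx

section Rot

lemma rot_mk {n j : ℕ} (h : j + 1 < n) :
    finRotate n ⟨j, Nat.lt_of_succ_lt h⟩ = ⟨j + 1, h⟩ := by
  obtain ⟨m, rfl⟩ : ∃ m, n = m + 1 := ⟨n - 1, by omega⟩
  exact finRotate_of_lt (by omega)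

lemma rot_pow_zero {n : ℕ} [NeZero n] (j : ℕ) (h : j < n) :
    ((finRotate n) ^ j) 0 = ⟨j, h⟩ := by
  induction j with
  | zero => rfl
  | succ j ih => rw [pow_succ', Equiv.Perm.mul_apply, ih (by omega), rot_mk]

lemma rot_pow_n {n : ℕ} [NeZero n] : (finRotate n) ^ n = 1 := by
  have h0 : ((finRotate n) ^ n) 0 = 0 := by
    obtain ⟨m, rfl⟩ : ∃ m, n = m + 1 := ⟨n - 1, by have := NeZero.pos n; omega⟩
    rw [pow_succ', Equiv.Perm.mul_apply, rot_pow_zero m (by omega)]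
    exact finRotate_last'
  ext x
  have hx := rot_pow_zero (n := n) x.1 x.2
  rw [show x = ((finRotate n) ^ x.1) 0 from hx.symm]
  rw [← Equiv.Perm.mul_apply, ← pow_add, add_comm, pow_add, Equiv.Perm.mul_apply, h0]
  rfl

end Rot

namespace Cx

variable {F : Type*} [Field F] {n : ℕ} [NeZero n] (c : Cx F n)

/-- Total degree of an exponent vector. -/
def deg {n : ℕ} (a : Fin n →₀ ℤ) : ℤ := ∑ i, a i

lemma deg_add {n : ℕ} (a b : Fin n →₀ ℤ) : deg (a + b) = deg a + deg b := by
  simp [deg, Finset.sum_add_distrib]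

lemma deg_neg {n : ℕ} (a : Fin n →₀ ℤ) : deg (-a) = - deg a := by
  simp [deg]

lemma deg_zero {n : ℕ} : deg (0 : Fin n →₀ ℤ) = 0 := by
  simp [deg]

lemma deg_single {n : ℕ} (i : Fin n) (m : ℤ) : deg (Finsupp.single i m) = m := by
  classical
  simp [deg, Finsupp.single_apply]

lemma deg_equiv {n : ℕ} (w : Equiv.Perm (Fin n)) (a : Fin n →₀ ℤ) :
    deg (Finsupp.equivMapDomain w a) = deg a := by
  simp only [deg, Finsupp.equivMapDomain_apply]
  exact Equiv.sum_comp w.symm a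

lemma equivMapDomain_one' {n : ℕ} (v : Fin n →₀ ℤ) :
    Finsupp.equivMapDomain (1 : Equiv.Perm (Fin n)) v = v := by
  ext i
  simp only [Finsupp.equivMapDomain_apply]
  rfl

lemma piInv_pow (j : ℕ) (v : Fin n →₀ ℤ) :
    (c.piInv ^ j) (mono v 1) = c.q ^ (∑ i ∈ Finset.range j, v (((finRotate n) ^ i) 0))
      • mono (Finsupp.equivMapDomain (((finRotate n) ^ j)⁻¹) v) 1 := by
  induction j with
  | zero =>
    simp only [pow_zero, Finset.range_zero, Finset.sum_empty, zpow_zero, one_smul, inv_one]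
    rw [Module.End.one_apply, equivMapDomain_one']
  | succ j ih =>
    rw [pow_succ', Module.End.mul_apply, ih, map_smul, c.hpiInv, smul_smul, ← zpow_add₀ c.hq,
      Finset.sum_range_succ]
    have e0 : Finsupp.equivMapDomain (finRotate n).symm
        (Finsupp.equivMapDomain (finRotate n ^ j)⁻¹ v)
          = Finsupp.equivMapDomain (finRotate n ^ (j + 1))⁻¹ v := by
      rw [pow_succ, mul_inv_rev]
      ext i
      simp only [Finsupp.equivMapDomain_apply]
      rfl
    rw [e0]
    rfl

lemma dlt_mono (v : Fin n →₀ ℤ) (r : F) :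
    (c.piInv ^ n) (mono v r) = c.q ^ (deg v) • mono v r := by
  rw [mono_eq_smul, map_smul, piInv_pow, rot_pow_n, smul_comm]
  have e0 : ∑ i ∈ Finset.range n, v ((finRotate n ^ i) 0) = deg v := by
    rw [Finset.sum_range]
    apply Finset.sum_congr rfl
    intro i _
    rw [rot_pow_zero i.1 i.2]
  rw [e0, inv_one, equivMapDomain_one']

lemma piA_pow_apply (j : ℕ) (p : Laur F n) : (c.piA ^ j) p = (c.piInv ^ j) p := by
  induction j with
  | zero => rfl
  | succ j ih =>
    rw [pow_succ', pow_succ', AlgEquiv.mul_apply, ih]; rfl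

lemma s_mono {k : ℕ} (hk : k + 1 < n) (v : Fin n →₀ ℤ) (r : F) :
    c.s k (mono v r) = mono (Finsupp.equivMapDomain
      (Equiv.swap ⟨k, Nat.lt_of_succ_lt hk⟩ ⟨k + 1, hk⟩) v) r := by
  rw [s_of_lt c hk, WA_apply, c.hW]

lemma dlt_s {k : ℕ} (hk : k + 1 < n) (p : Laur F n) :
    (c.piA ^ n) (c.s k p) = c.s k ((c.piA ^ n) p) := by
  have : ((c.piA ^ n).toLinearMap ∘ₗ (c.s k).toLinearMap)
      = (c.s k).toLinearMap ∘ₗ (c.piA ^ n).toLinearMap := by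
    apply laur_ext
    intro a
    simp only [LinearMap.comp_apply, AlgEquiv.toLinearMap_apply, piA_pow_apply, dlt_mono, map_smul,
      s_mono c hk, deg_equiv]
  exact LinearMap.congr_fun this p

lemma dlt_xx {k : ℕ} (hk : k < n) : (c.piA ^ n) (xx k) = c.q • xx k := by
  rw [piA_pow_apply, xx_of_lt hk, Xel, dlt_mono, deg_single, zpow_one]

lemma dlt_T {k : ℕ} (hk : k + 1 < n) : c.piInv ^ n * c.T k = c.T k * c.piInv ^ n := by
  apply LinearMap.ext
  intro p
  simp only [Module.End.mul_apply, ← piA_pow_apply]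
  exact c.T_intertw hk hk (c.piA ^ n) c.q c.hq (c.dlt_xx (by omega)) (c.dlt_xx hk)
    (c.dlt_s hk) p

lemma pi_T {k : ℕ} (hk : k + 1 + 1 < n) : c.piInv * c.T (k + 1) = c.T k * c.piInv := by
  apply LinearMap.ext
  intro p
  simp only [Module.End.mul_apply, ← piA_apply]
  have hx : ∀ j, j + 1 < n → c.piA (xx (j + 1)) = (1 : F) • xx j := by
    intro j hj
    rw [piA_apply, xx_of_lt hj, Xel, c.hpiInv, Finsupp.equivMapDomain_single, one_smul,
      xx_of_lt (by omega), Xel, ← rot_mk hj, Equiv.symm_apply_apply, Finsupp.single_apply,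
      if_neg, zpow_zero, one_smul]
    rw [rot_mk hj]
    intro h
    simpa using congrArg Fin.val h
  refine c.T_intertw (by omega) hk c.piA 1 one_ne_zero (hx k (by omega)) (hx (k + 1) hk) ?_ p
  intro p
  have hk' : k + 1 < n := by omega
  have : (c.piA.toLinearMap ∘ₗ (c.s (k + 1)).toLinearMap)
      = (c.s k).toLinearMap ∘ₗ c.piA.toLinearMap := by
    apply laur_ext
    intro a
    simp only [LinearMap.comp_apply, AlgEquiv.toLinearMap_apply, piA_apply, c.hpiInv, map_smul,
      s_mono c hk, s_mono c hk']
    have e0 : (Finsupp.equivMapDomain (Equiv.swap (⟨k + 1, hk'⟩ : Fin n) ⟨k + 1 + 1, hk⟩) a) 0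
        = a 0 := by
      rw [Finsupp.equivMapDomain_apply, Equiv.symm_swap, Equiv.swap_apply_of_ne_of_ne]
      · intro h
        simpa using congrArg Fin.val h
      · intro h
        simpa using congrArg Fin.val h
    rw [e0]
    congr 2
    · have e : (finRotate n).symm * Equiv.swap ⟨k + 1, hk'⟩ ⟨k + 1 + 1, hk⟩
          = Equiv.swap ⟨k, Nat.lt_of_succ_lt hk'⟩ ⟨k + 1, hk'⟩ * (finRotate n).symm := by
        rw [Equiv.mul_swap_eq_swap_mul, ← rot_mk hk, Equiv.symm_apply_apply]
        congr 2
        rw [← rot_mk hk', Equiv.symm_apply_apply]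
      have e' := congrArg (fun w => Finsupp.equivMapDomain w a) e
      have e2 : ∀ w w' : Equiv.Perm (Fin n), Finsupp.equivMapDomain (w * w') a
          = Finsupp.equivMapDomain w (Finsupp.equivMapDomain w' a) := by
        intro w w'
        ext i
        simp only [Finsupp.equivMapDomain_apply]
        rfl
      simpa only [e2] using e'
  exact LinearMap.congr_fun this p

lemma Yt_eq : ((List.range n).map c.Y).prod = c.piInv ^ n :=
  prodY n (NeZero.pos n) c.T c.Ti c.Y c.piInv c.pi
    (fun _ _ h1 h2 => c.T_comm h1 (by omega)) (fun _ h => c.T_braid (by omega))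
    (fun _ hk => (c.hTinv _ (by omega)).1) (fun _ hk => c.pi_T (by omega)) c.piInv_pi
    (fun _ hk => c.dlt_T (by omega)) c.hY

/-- The powers of `Ỹ`. -/
abbrev Yz (m : ℤ) : Module.End F (Laur F n) :=
  zpowOp (((List.range n).map c.Y).prod) ((((List.range n).map c.Yi).reverse).prod) m

lemma Yz_mono (m : ℤ) (v : Fin n →₀ ℤ) : c.Yz m (mono v 1) = c.q ^ (m * deg v) • mono v 1 := by
  have h1 : ∀ j : ℕ, ((c.piInv ^ n) ^ j) (mono v 1) = c.q ^ ((j : ℤ) * deg v) • mono v 1 := by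
    intro j
    induction j with
    | zero => simp
    | succ j ih =>
      rw [pow_succ', Module.End.mul_apply, ih, map_smul, dlt_mono, smul_smul, ← zpow_add₀ c.hq]
      congr 2
      push_cast; ring
  have h2 := prodYi n c.Y c.Yi c.hYinv
  rw [Yt_eq] at h2
  set V := (((List.range n).map c.Yi).reverse).prod with hV
  have h3 : V (mono v 1) = c.q ^ (-deg v) • mono v 1 := by
    have hinj : Function.Injective (c.piInv ^ n : Module.End F (Laur F n)) := by
      intro x y hxy
      rw [← piA_pow_apply, ← piA_pow_apply] at hxy
      exact (c.piA ^ n).injective hxy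
    apply hinj
    rw [map_smul, dlt_mono, smul_smul, ← zpow_add₀ c.hq, neg_add_cancel, zpow_zero, one_smul]
    exact LinearMap.congr_fun h2 _
  have h4 : ∀ j : ℕ, (V ^ j) (mono v 1) = c.q ^ (-(j : ℤ) * deg v) • mono v 1 := by
    intro j
    induction j with
    | zero => simp
    | succ j ih =>
      rw [pow_succ', Module.End.mul_apply, ih, map_smul, h3, smul_smul, ← zpow_add₀ c.hq]
      congr 2
      push_cast; ring
  rw [Yz, ← hV, Yt_eq, zpowOp]
  split_ifs with h
  · rw [h1, Int.toNat_of_nonneg h]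
  · rw [h4, Int.toNat_of_nonneg (by omega), neg_neg]

end Cx

section Homog

variable {F : Type*} [Field F] {A : Type*} [Ring A] [Algebra F A]

/-- Elements which `q`-commute with `U`, with degree `d`. -/
def hm (q : F) (U : A) (d : ℤ) : Submodule F A where
  carrier := {f | f * U = q ^ d • (U * f)}
  add_mem' := by
    intro a b ha hb
    simp only [Set.mem_ofPred_eq] at *
    rw [add_mul, mul_add, smul_add, ha, hb]
  zero_mem' := by simp
  smul_mem' := by
    intro r a ha
    simp only [Set.mem_ofPred_eq] at *
    rw [smul_mul_assoc, mul_smul_comm, ha, smul_comm]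

lemma mem_hm {q : F} {U : A} {d : ℤ} {f : A} : f ∈ hm q U d ↔ f * U = q ^ d • (U * f) := Iff.rfl

lemma hm_one (q : F) (U : A) : (1 : A) ∈ hm q U 0 := by simp [mem_hm]

lemma hm_mul {q : F} (hq : q ≠ 0) {U : A} {d e : ℤ} {f g : A} (hf : f ∈ hm q U d)
    (hg : g ∈ hm q U e) : f * g ∈ hm q U (d + e) := by
  rw [mem_hm] at *
  rw [mul_assoc, hg, mul_smul_comm, ← mul_assoc, hf, smul_mul_assoc, smul_smul, mul_assoc,
    add_comm, zpow_add₀ hq]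

lemma hm_pow {q : F} (hq : q ≠ 0) {U : A} {d : ℤ} {f : A} (hf : f ∈ hm q U d) (m : ℕ) :
    f ^ m ∈ hm q U (m * d) := by
  induction m with
  | zero => simpa using hm_one q U
  | succ m ih =>
    rw [pow_succ]
    have := hm_mul hq ih hf
    convert this using 2
    push_cast; ring

lemma hm_inv {q : F} (hq : q ≠ 0) {U : A} {d : ℤ} {f g : A} (hf : f ∈ hm q U d)
    (h1 : f * g = 1) (h2 : g * f = 1) : g ∈ hm q U (-d) := by
  rw [mem_hm] at *
  have h3 : U * f = q ^ (-d) • (f * U) := by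
    rw [hf, smul_smul, ← zpow_add₀ hq, neg_add_cancel, zpow_zero, one_smul]
  calc g * U = g * (U * f) * g := by rw [mul_assoc, mul_assoc, h1, mul_one]
    _ = q ^ (-d) • (g * f * (U * g)) := by
      rw [h3, mul_smul_comm, smul_mul_assoc]; simp only [mul_assoc]
    _ = _ := by rw [h2, one_mul]

lemma hm_aF {q : F} (hq : q ≠ 0) {U : A} {t : ℕ → A} {s l : ℕ}
    (h : ∀ k, k < s + l → t k ∈ hm q U 0) : aF t s l ∈ hm q U 0 := by
  induction l with
  | zero => rw [aF_zero']; exact hm_one q U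
  | succ l ih =>
    rw [aF_succR]
    have := hm_mul hq (ih (fun k hk => h k (by omega))) (h (s + l) (by omega))
    simpa using this

lemma hm_dF {q : F} (hq : q ≠ 0) {U : A} {t : ℕ → A} {s l : ℕ}
    (h : ∀ k, k < s + l → t k ∈ hm q U 0) : dF t s l ∈ hm q U 0 := by
  induction l with
  | zero => rw [dF_zero']; exact hm_one q U
  | succ l ih =>
    rw [dF_succL]
    have := hm_mul hq (h (s + l) (by omega)) (ih (fun k hk => h k (by omega)))
    simpa using this

/-- Finite sums of homogeneous elements. -/
def hmA (q : F) (hq : q ≠ 0) (U : A) : Subalgebra F A where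
  carrier := ((⨆ d : ℤ, hm q U d : Submodule F A) : Set A)
  add_mem' := fun ha hb => Submodule.add_mem _ ha hb
  mul_mem' := by
    intro a b ha hb
    rw [SetLike.mem_coe] at *
    have h := Submodule.mul_mem_mul ha hb
    rw [Submodule.iSup_mul] at h
    refine (iSup_le fun d => ?_ : _ ≤ ⨆ d : ℤ, hm q U d) h
    rw [Submodule.mul_iSup]
    refine iSup_le fun e => ?_
    rw [Submodule.mul_le]
    intro x hx y hy
    exact Submodule.mem_iSup_of_mem (d + e) (hm_mul hq hx hy)
  algebraMap_mem' := by
    intro r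
    rw [Algebra.algebraMap_eq_smul_one]
    exact Submodule.smul_mem _ _ (Submodule.mem_iSup_of_mem 0 (hm_one q U))

lemma mem_hmA {q : F} {hq : q ≠ 0} {U : A} {f : A} :
    f ∈ hmA q hq U ↔ f ∈ ⨆ d : ℤ, hm q U d := Iff.rfl

lemma hm_mem_hmA {q : F} (hq : q ≠ 0) {U : A} {d : ℤ} {f : A} (hf : f ∈ hm q U d) :
    f ∈ hmA q hq U := mem_hmA.2 (Submodule.mem_iSup_of_mem d hf)

lemma hm_indep (q : F) (hq : q ≠ 0) (hqr : ∀ m : ℤ, q ^ m = 1 → m = 0) (U U' : A)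
    (h1 : U * U' = 1) (h2 : U' * U = 1) : iSupIndep (hm q U) := by
  let L : Module.End F A := LinearMap.mulLeft F U' ∘ₗ LinearMap.mulRight F U
  have h := Module.End.eigenspaces_iSupIndep L
  have hinj : Function.Injective (fun d : ℤ => q ^ d) := by
    intro a b hab
    simp only at hab
    have : q ^ (a - b) = 1 := by
      rw [zpow_sub₀ hq, hab, div_self (zpow_ne_zero _ hq)]
    have := hqr _ this
    omega
  have h3 := h.comp hinj
  have h4 : (L.eigenspace ∘ fun d : ℤ => q ^ d) = hm q U := by
    funext d
    ext f
    rw [Function.comp, Module.End.mem_eigenspace_iff, mem_hm]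
    change U' * (f * U) = _ ↔ _
    constructor
    · intro h
      have := congrArg (U * ·) h
      simpa only [← mul_assoc, h1, one_mul, mul_smul_comm] using this
    · intro h
      rw [h, mul_smul_comm, ← mul_assoc, h2, one_mul]
  rwa [h4] at h3

/-- The key vanishing lemma. -/
lemma hm_vanish (q : F) (hq : q ≠ 0) (hqr : ∀ m : ℤ, q ^ m = 1 → m = 0) (U U' : A)
    (h1 : U * U' = 1) (h2 : U' * U = 1) (B y yi : A) (hB : B ∈ hmA q hq U)
    (hy : y ∈ hm q U 1) (hyi : yi * y = 1) (hBy : B * (y - yi) = 0) : B = 0 := by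
  have e1 : B * y = B * yi := by rw [← sub_eq_zero, ← mul_sub, hBy]
  have e2 : B * y ^ 2 = B := by
    rw [pow_two, ← mul_assoc, e1, mul_assoc, hyi, mul_one]
  have e3 : ∀ k : ℕ, B * (y ^ 2) ^ k = B := by
    intro k
    induction k with
    | zero => simp
    | succ k ih => rw [pow_succ, ← mul_assoc, ih, e2]
  obtain ⟨s, hs⟩ := (Submodule.mem_iSup_iff_exists_finset).1 (mem_hmA.1 hB)
  obtain ⟨N, hN⟩ : ∃ N : ℕ, ∀ d ∈ s, |d| ≤ N := by
    refine ⟨s.sup Int.natAbs, fun d hd => ?_⟩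
    rw [Int.abs_eq_natAbs]
    exact_mod_cast Finset.le_sup (f := Int.natAbs) hd
  have a1 : B ∈ ⨆ d ∈ Set.Icc (-(N : ℤ)) N, hm q U d := by
    refine (iSup₂_le fun d hd => ?_ : ⨆ d ∈ s, hm q U d ≤ _) hs
    exact le_iSup₂_of_le d (abs_le.1 (hN d hd)) le_rfl
  have a2 : B ∈ ⨆ d ∈ Set.Ioi (N : ℤ), hm q U d := by
    rw [← e3 (N + 1)]
    have : ⨆ d ∈ Set.Icc (-(N : ℤ)) N, hm q U d
        ≤ (⨆ d ∈ Set.Ioi (N : ℤ), hm q U d).comap (LinearMap.mulRight F ((y ^ 2) ^ (N + 1))) := by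
      refine iSup₂_le fun d hd => ?_
      intro x hx
      have m1 := hm_mul hq hx (hm_pow hq (hm_pow hq hy 2) (N + 1))
      have : d + ((N + 1 : ℕ) : ℤ) * (((2 : ℕ) : ℤ) * 1) ∈ Set.Ioi (N : ℤ) := by
        have := hd.1
        simp only [Set.mem_Ioi]
        push_cast
        omega
      exact Submodule.mem_iSup_of_mem _ (Submodule.mem_iSup_of_mem this m1)
    exact this a1
  have dj := (hm_indep q hq hqr U U' h1 h2).disjoint_biSup_biSup
    (s := Set.Icc (-(N : ℤ)) N) (t := Set.Ioi (N : ℤ)) (by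
      rw [Set.disjoint_left]
      intro a ha hb
      exact absurd ha.2 (not_le.2 hb))
  exact Submodule.disjoint_def.1 dj B a1 a2

end Homog

namespace Cx

variable {F : Type*} [Field F] {n : ℕ} [NeZero n] (c : Cx F n)

/-- The operators `D_i`. -/
def D (i : ℕ) : Module.End F (Laur F n) :=
  aF c.T i (n - 1 - i) * ((c.q - c.q⁻¹)⁻¹ • (XinvOp (n - 1) * (c.Y (n - 1) - c.Yi (n - 1))))
    * dF c.T i (n - 1 - i)

/-- The operators `e_{ij}`. -/
def e (i j : ℕ) : Module.End F (Laur F n) := XOp i * c.D j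

/-- The algebra. -/
abbrev H : Subalgebra F (Module.End F (Laur F n)) :=
  Algebra.adjoin F (HglSet c.T c.Y c.Yi c.e)

lemma Ti_hm {U : Module.End F (Laur F n)} {k : ℕ} (h : c.T k ∈ hm c.q U 0) :
    c.Ti k ∈ hm c.q U 0 := by
  rw [c.hTi]
  exact Submodule.add_mem _ h (Submodule.smul_mem _ _ (hm_one _ _))

lemma Y_hm {U : Module.End F (Laur F n)} {d : ℤ} (hT : ∀ k, k + 1 < n → c.T k ∈ hm c.q U 0)
    (hp : c.piInv ∈ hm c.q U d) {i : ℕ} (hi : i < n) : c.Y i ∈ hm c.q U d := by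
  rw [c.hY]
  have h1 : aF c.T i (n - 1 - i) ∈ hm c.q U 0 := hm_aF c.hq (fun k hk => hT k (by omega))
  have h2 : aF c.Ti 0 i ∈ hm c.q U 0 := hm_aF c.hq (fun k hk => c.Ti_hm (hT k (by omega)))
  simpa using hm_mul c.hq (hm_mul c.hq h1 hp) h2

lemma Yi_hm {U : Module.End F (Laur F n)} {d : ℤ} (hT : ∀ k, k + 1 < n → c.T k ∈ hm c.q U 0)
    (hp : c.piInv ∈ hm c.q U d) {i : ℕ} (hi : i < n) : c.Yi i ∈ hm c.q U (-d) :=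
  hm_inv c.hq (c.Y_hm hT hp hi) (c.hYinv i hi).1 (c.hYinv i hi).2

lemma XOp_mono {i : ℕ} (hi : i < n) (a : Fin n →₀ ℤ) (r : F) :
    XOp i (mono a r) = mono (Finsupp.single ⟨i, hi⟩ 1 + a) r := by
  rw [XOp, dif_pos hi, mulOp_apply, Xel, mono_mul, one_mul]

lemma XinvOp_mono {i : ℕ} (hi : i < n) (a : Fin n →₀ ℤ) (r : F) :
    XinvOp i (mono a r) = mono (Finsupp.single ⟨i, hi⟩ (-1) + a) r := by
  rw [XinvOp, dif_pos hi, mulOp_apply, XinvEl, mono_mul, one_mul]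

/-! ### Commutation with `Ỹ` -/

lemma dlt_XOp {i : ℕ} (hi : i < n) : XOp i ∈ hm c.q (c.piInv ^ n) (-1) := by
  rw [mem_hm]
  apply laur_ext
  intro a
  rw [LinearMap.smul_apply, Module.End.mul_apply, Module.End.mul_apply, c.dlt_mono, map_smul,
    XOp_mono hi, c.dlt_mono, smul_smul, ← zpow_add₀ c.hq, deg_add, deg_single, neg_add_cancel_left]

lemma dlt_XinvOp {i : ℕ} (hi : i < n) : XinvOp i ∈ hm c.q (c.piInv ^ n) 1 := by
  rw [mem_hm]
  apply laur_ext
  intro a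
  rw [LinearMap.smul_apply, Module.End.mul_apply, Module.End.mul_apply, c.dlt_mono, map_smul,
    XinvOp_mono hi, c.dlt_mono, smul_smul, ← zpow_add₀ c.hq, deg_add, deg_single,
    add_neg_cancel_left]

lemma dlt_T' (k : ℕ) (hk : k + 1 < n) : c.T k ∈ hm c.q (c.piInv ^ n) 0 := by
  rw [mem_hm, zpow_zero, one_smul, c.dlt_T hk]

lemma dlt_piInv : c.piInv ∈ hm c.q (c.piInv ^ n) 0 := by
  rw [mem_hm, zpow_zero, one_smul]
  exact (Commute.self_pow c.piInv n).eq

lemma dlt_e {i j : ℕ} (hi : i < n) (hj : j < n) : c.e i j ∈ hm c.q (c.piInv ^ n) 0 := by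
  have hn : n - 1 < n := by have := NeZero.pos n; omega
  have h1 : aF c.T j (n - 1 - j) ∈ hm c.q (c.piInv ^ n) 0 :=
    hm_aF c.hq (fun k hk => c.dlt_T' k (by omega))
  have h2 : dF c.T j (n - 1 - j) ∈ hm c.q (c.piInv ^ n) 0 :=
    hm_dF c.hq (fun k hk => c.dlt_T' k (by omega))
  have h3 := Submodule.sub_mem _ (c.Y_hm c.dlt_T' c.dlt_piInv hn)
    (by simpa using c.Yi_hm c.dlt_T' c.dlt_piInv hn)
  have h4 := Submodule.smul_mem _ (c.q - c.q⁻¹)⁻¹ (hm_mul c.hq (c.dlt_XinvOp hn) h3)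
  have := hm_mul c.hq (c.dlt_XOp hi) (hm_mul c.hq (hm_mul c.hq h1 h4) h2)
  rw [show (-1 : ℤ) + (0 + (1 + 0) + 0) = 0 by norm_num] at this
  exact this

lemma dlt_H {g : Module.End F (Laur F n)} (hg : g ∈ c.H) :
    g * c.piInv ^ n = c.piInv ^ n * g := by
  have key : ∀ x ∈ HglSet c.T c.Y c.Yi c.e, x ∈ hm c.q (c.piInv ^ n) 0 := by
    intro x hx
    rcases hx with ⟨k, hk, rfl⟩ | ⟨i, hi, rfl⟩ | ⟨i, hi, rfl⟩ | ⟨i, j, hi, hj, hij, rfl⟩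
    · exact c.dlt_T' k hk
    · exact c.Y_hm c.dlt_T' c.dlt_piInv hi
    · simpa using c.Yi_hm c.dlt_T' c.dlt_piInv hi
    · exact c.dlt_e hi hj
  have : g ∈ hm c.q (c.piInv ^ n) 0 := by
    induction hg using Algebra.adjoin_induction with
    | mem x hx => exact key x hx
    | algebraMap r =>
      rw [Algebra.algebraMap_eq_smul_one]
      exact Submodule.smul_mem _ _ (hm_one _ _)
    | add x y _ _ hx hy => exact Submodule.add_mem _ hx hy
    | mul x y _ _ hx hy => simpa using hm_mul c.hq hx hy
  simpa [mem_hm] using this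

lemma easy {f g : Module.End F (Laur F n)} (hf : f ∈ Submodule.span F (Set.range c.Yz))
    (hg : g ∈ c.H) : f * g = g * f := by
  have h1 := c.dlt_H hg
  have hV1 := prodYi n c.Y c.Yi c.hYinv
  rw [Yt_eq] at hV1
  set V := (((List.range n).map c.Yi).reverse).prod with hV
  have hV2 : V * c.piInv ^ n = 1 := by
    apply LinearMap.ext
    intro x
    apply (c.piA ^ n).injective
    rw [piA_pow_apply, piA_pow_apply]
    change (c.piInv ^ n * (V * c.piInv ^ n)) x = _
    rw [← mul_assoc, hV1, one_mul]
    rfl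
  have h2 : g * V = V * g := by
    calc g * V = V * c.piInv ^ n * g * V := by rw [hV2, one_mul]
      _ = V * (g * c.piInv ^ n) * V := by rw [h1]; simp only [mul_assoc]
      _ = V * g * (c.piInv ^ n * V) := by simp only [mul_assoc]
      _ = _ := by rw [hV1, mul_one]
  induction hf using Submodule.span_induction with
  | mem x hx =>
    obtain ⟨m, rfl⟩ := hx
    rw [Yz, Yt_eq, zpowOp]
    split_ifs
    · exact ((Commute.pow_right (show Commute g (c.piInv ^ n) from h1) _).eq).symm
    · exact ((Commute.pow_right (show Commute g V from h2) _).eq).symm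
  | zero => simp
  | add x y _ _ hx hy => rw [add_mul, mul_add, hx, hy]
  | smul r x _ hx => rw [smul_mul_assoc, mul_smul_comm, hx]

/-! ### Commutation with degree zero multipliers -/

/-- The exponent vector `(1, …, 1)`. -/
def ones (n : ℕ) : Fin n →₀ ℤ := Finsupp.equivFunOnFinite.symm (fun _ => 1)

lemma ones_apply (i : Fin n) : ones n i = 1 := rfl

lemma ones_equiv (w : Equiv.Perm (Fin n)) : Finsupp.equivMapDomain w (ones n) = ones n := by
  ext i
  simp [Finsupp.equivMapDomain_apply, ones_apply]

/-- Multiplication by `X_1 ⋯ X_n`. -/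
def PP (F : Type*) [Field F] (n : ℕ) : Module.End F (Laur F n) := mulOp (mono (ones n) 1)

lemma mulOp_mul (x y : Laur F n) : mulOp (x * y) = mulOp x * mulOp y := by
  apply LinearMap.ext
  intro p
  simp only [Module.End.mul_apply, mulOp_apply, mul_assoc]

lemma mulOp_comm (x y : Laur F n) : mulOp x * mulOp y = mulOp y * mulOp x := by
  rw [← mulOp_mul, mul_comm, mulOp_mul]

lemma mulOp_one : mulOp (1 : Laur F n) = 1 := by
  apply LinearMap.ext
  intro p
  rw [mulOp_apply, one_mul]
  rfl

lemma PP_mulOp (x : Laur F n) : mulOp x ∈ hm c.q (PP F n) 0 := by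
  rw [mem_hm, zpow_zero, one_smul, PP, mulOp_comm]

lemma PP_T (k : ℕ) (hk : k + 1 < n) : c.T k ∈ hm c.q (PP F n) 0 := by
  rw [mem_hm, zpow_zero, one_smul, PP]
  apply LinearMap.ext
  intro p
  simp only [Module.End.mul_apply, mulOp_apply]
  apply c.T_symm hk
  rw [c.s_mono hk, ones_equiv]

lemma PP_piInv : c.piInv ∈ hm c.q (PP F n) 1 := by
  rw [mem_hm, PP]
  apply LinearMap.ext
  intro p
  simp only [Module.End.mul_apply, mulOp_apply, LinearMap.smul_apply]
  rw [c.pi_mul, c.hpiInv, ones_equiv, ones_apply, smul_mul_assoc]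

lemma XOp_eq {i : ℕ} (hi : i < n) : (XOp i : Module.End F (Laur F n)) = mulOp (Xel ⟨i, hi⟩) :=
  dif_pos hi

lemma XinvOp_eq {i : ℕ} (hi : i < n) :
    (XinvOp i : Module.End F (Laur F n)) = mulOp (XinvEl ⟨i, hi⟩) := dif_pos hi

lemma PP_H {g : Module.End F (Laur F n)} (hg : g ∈ c.H) : g ∈ hmA c.q c.hq (PP F n) := by
  have hn : n - 1 < n := by have := NeZero.pos n; omega
  refine Algebra.adjoin_le (S := hmA c.q c.hq (PP F n)) ?_ hg
  intro x hx
  rcases hx with ⟨k, hk, rfl⟩ | ⟨i, hi, rfl⟩ | ⟨i, hi, rfl⟩ | ⟨i, j, hi, hj, hij, rfl⟩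
  · exact hm_mem_hmA c.hq (c.PP_T k hk)
  · exact hm_mem_hmA c.hq (c.Y_hm c.PP_T c.PP_piInv hi)
  · exact hm_mem_hmA c.hq (c.Yi_hm c.PP_T c.PP_piInv hi)
  · rw [e, D, XOp_eq hi, XinvOp_eq hn]
    refine mul_mem (hm_mem_hmA c.hq (c.PP_mulOp _)) (mul_mem (mul_mem ?_ ?_) ?_)
    · exact hm_mem_hmA c.hq (hm_aF c.hq (fun k hk => c.PP_T k (by omega)))
    · refine Subalgebra.smul_mem _ (mul_mem (hm_mem_hmA c.hq (c.PP_mulOp _)) (sub_mem ?_ ?_)) _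
      · exact hm_mem_hmA c.hq (c.Y_hm c.PP_T c.PP_piInv hn)
      · exact hm_mem_hmA c.hq (c.Yi_hm c.PP_T c.PP_piInv hn)
    · exact hm_mem_hmA c.hq (hm_dF c.hq (fun k hk => c.PP_T k (by omega)))

lemma q_sub_ne : c.q - c.q⁻¹ ≠ 0 := by
  intro h
  have h1 : c.q ^ (2 : ℤ) = 1 := by
    rw [sub_eq_zero] at h
    rw [zpow_two]
    nth_rewrite 2 [h]
    exact mul_inv_cancel₀ c.hq
  simpa using c.hqr _ h1

lemma central_gen {f : Module.End F (Laur F n)} (hf : f ∈ c.H)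
    (hc : ∀ g ∈ c.H, f * g = g * f) (i : ℕ) (hi : i < n - 1) (hi' : i < n) (hn : n - 1 < n) :
    f * mulOp (mono (Finsupp.single ⟨i, hi'⟩ 1 + Finsupp.single ⟨n - 1, hn⟩ (-1)) 1)
      = mulOp (mono (Finsupp.single ⟨i, hi'⟩ 1 + Finsupp.single ⟨n - 1, hn⟩ (-1)) 1) * f := by
  set M : Module.End F (Laur F n) :=
    mulOp (mono (Finsupp.single ⟨i, hi'⟩ 1 + Finsupp.single ⟨n - 1, hn⟩ (-1)) 1) with hM
  have hYm : c.Y (n - 1) ∈ c.H := Algebra.subset_adjoin (Or.inr (Or.inl ⟨_, hn, rfl⟩))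
  have hYim : c.Yi (n - 1) ∈ c.H := Algebra.subset_adjoin (Or.inr (Or.inr (Or.inl ⟨_, hn, rfl⟩)))
  have hem : c.e i (n - 1) ∈ c.H :=
    Algebra.subset_adjoin (Or.inr (Or.inr (Or.inr ⟨_, _, hi', hn, by omega, rfl⟩)))
  have he : c.e i (n - 1) = (c.q - c.q⁻¹)⁻¹ • (M * (c.Y (n - 1) - c.Yi (n - 1))) := by
    rw [e, D, Nat.sub_self, aF_zero', dF_zero', one_mul, mul_one, mul_smul_comm, ← mul_assoc,
      XOp_eq hi', XinvOp_eq hn, ← mulOp_mul, Xel, XinvEl, mono_mul, one_mul]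
  have h1 := hc _ hem
  rw [he, mul_smul_comm, smul_mul_assoc] at h1
  have h2 := smul_right_injective _ (inv_ne_zero c.q_sub_ne) h1
  have h3 : (c.Y (n - 1) - c.Yi (n - 1)) * f = f * (c.Y (n - 1) - c.Yi (n - 1)) := by
    rw [sub_mul, mul_sub, hc _ hYm, hc _ hYim]
  have h4 : (f * M - M * f) * (c.Y (n - 1) - c.Yi (n - 1)) = 0 := by
    rw [sub_mul, mul_assoc, h2, mul_assoc, mul_assoc, h3, sub_self]
  have hMm : M ∈ hmA c.q c.hq (PP F n) := hm_mem_hmA c.hq (c.PP_mulOp _)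
  have hfm := c.PP_H hf
  have hU1 : (PP F n) * mulOp (mono (-ones n) 1) = 1 := by
    rw [PP, ← mulOp_mul, mono_mul, add_neg_cancel, one_mul, mono_zero_one, mulOp_one]
  have hU2 : mulOp (mono (-ones n) 1) * (PP F n) = 1 := by
    rw [PP, mulOp_comm]; exact hU1
  have := hm_vanish c.q c.hq c.hqr (PP F n) _ hU1 hU2 (f * M - M * f) (c.Y (n - 1))
    (c.Yi (n - 1)) (sub_mem (mul_mem hfm hMm) (mul_mem hMm hfm))
    (c.Y_hm c.PP_T c.PP_piInv hn) (c.hYinv _ hn).2 h4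
  exact sub_eq_zero.1 this

lemma central_deg0 {f : Module.End F (Laur F n)} (hf : f ∈ c.H)
    (hc : ∀ g ∈ c.H, f * g = g * f) (a : Fin n →₀ ℤ) (ha : deg a = 0) :
    f * mulOp (mono a 1) = mulOp (mono a 1) * f := by
  have hn : n - 1 < n := by have := NeZero.pos n; omega
  let S : AddSubgroup (Fin n →₀ ℤ) :=
    { carrier := {a | f * mulOp (mono a 1) = mulOp (mono a 1) * f}
      zero_mem' := by
        rw [Set.mem_ofPred_eq, mono_zero_one, mulOp_one, mul_one, one_mul]
      add_mem' := by
        intro x y hx hy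
        rw [Set.mem_ofPred_eq] at *
        rw [show (mono (x + y) 1 : Laur F n) = mono x 1 * mono y 1 by rw [mono_mul, one_mul],
          mulOp_mul, ← mul_assoc, hx, mul_assoc, hy, mul_assoc]
      neg_mem' := by
        intro x hx
        rw [Set.mem_ofPred_eq] at *
        have h1 : mulOp (mono x 1 : Laur F n) * mulOp (mono (-x) 1) = 1 := by
          rw [← mulOp_mul, mono_mul, one_mul, add_neg_cancel, mono_zero_one, mulOp_one]
        have h2 : mulOp (mono (-x) 1 : Laur F n) * mulOp (mono x 1) = 1 := by
          rw [mulOp_comm]; exact h1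
        calc f * mulOp (mono (-x) 1)
            = mulOp (mono (-x) 1) * (mulOp (mono x 1) * f) * mulOp (mono (-x) 1) := by
              rw [← mul_assoc, h2, one_mul]
          _ = mulOp (mono (-x) 1) * f * (mulOp (mono x 1) * mulOp (mono (-x) 1)) := by
              rw [← hx]; simp only [mul_assoc]
          _ = _ := by rw [h1, mul_one] }
  have hS : ∀ x, x ∈ S ↔ f * mulOp (mono x 1) = mulOp (mono x 1) * f := fun x => Iff.rfl
  have hgen : ∀ i : Fin n, Finsupp.single i 1 + Finsupp.single ⟨n - 1, hn⟩ (-1) ∈ S := by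
    intro i
    rcases Nat.lt_or_ge i.1 (n - 1) with h | h
    · exact (hS _).2 (c.central_gen hf hc i.1 h i.2 hn)
    · have : i = ⟨n - 1, hn⟩ := Fin.ext (by have := i.2; simp only; omega)
      rw [this, ← Finsupp.single_add, add_neg_cancel, Finsupp.single_zero]
      exact S.zero_mem
  have hsum : a = ∑ i, a i • (Finsupp.single i 1 + Finsupp.single ⟨n - 1, hn⟩ (-1)) := by
    have e2 : ∑ i, a i • (Finsupp.single (⟨n - 1, hn⟩ : Fin n) (-1 : ℤ)) = 0 := by
      rw [← Finset.sum_smul]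
      change deg a • _ = _
      rw [ha, zero_smul]
    simp only [smul_add]
    rw [Finset.sum_add_distrib, e2, add_zero]
    simp only [Finsupp.smul_single, smul_eq_mul, mul_one]
    exact (Finsupp.univ_sum_single a).symm
  rw [← hS, hsum]
  exact sum_mem fun i _ => zsmul_mem (hgen i) _

end Cx

namespace Cx

variable {F : Type*} [Field F] {n : ℕ} [NeZero n] (c : Cx F n)

/-- Monomial automorphisms. -/
def Gam (σ : Laur F n ≃ₐ[F] Laur F n) : Prop :=
  ∃ (κ : (Fin n →₀ ℤ) →+ ℤ) (β : (Fin n →₀ ℤ) →+ (Fin n →₀ ℤ)), β (ones n) = ones n ∧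
    ∀ a, σ (mono a 1) = mono (β a) (c.q ^ κ a)

lemma Gam_refl : c.Gam AlgEquiv.refl := by
  refine ⟨0, AddMonoidHom.id _, rfl, fun a => ?_⟩
  simp

lemma Gam_trans {σ ρ : Laur F n ≃ₐ[F] Laur F n} (hσ : c.Gam σ) (hρ : c.Gam ρ) :
    c.Gam (σ.trans ρ) := by
  obtain ⟨κ, β, h1, h2⟩ := hσ
  obtain ⟨κ', β', h1', h2'⟩ := hρ
  refine ⟨κ + κ'.comp β, β'.comp β, ?_, fun a => ?_⟩
  · rw [AddMonoidHom.comp_apply, h1, h1']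
  · rw [AlgEquiv.trans_apply, h2, mono_eq_smul, map_smul, h2', smul_mono, ← zpow_add₀ c.hq]
    rfl

/-- Permutation of exponents as an additive map. -/
def eqA (w : Equiv.Perm (Fin n)) : (Fin n →₀ ℤ) →+ (Fin n →₀ ℤ) :=
  AddMonoidHom.mk' (Finsupp.equivMapDomain w) (equivMapDomain_add' w)

lemma eqA_apply (w : Equiv.Perm (Fin n)) (a : Fin n →₀ ℤ) :
    eqA w a = Finsupp.equivMapDomain w a := rfl

lemma eqA_comp (w w' : Equiv.Perm (Fin n)) (a : Fin n →₀ ℤ) :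
    eqA w (eqA w' a) = eqA (w * w') a := by
  simp only [eqA_apply]
  ext i
  simp only [Finsupp.equivMapDomain_apply]
  rfl

lemma eqA_one (a : Fin n →₀ ℤ) : eqA 1 a = a := equivMapDomain_one' a

lemma Gam_s {k : ℕ} (hk : k + 1 < n) : c.Gam (c.s k) := by
  refine ⟨0, eqA (Equiv.swap ⟨k, Nat.lt_of_succ_lt hk⟩ ⟨k + 1, hk⟩), ones_equiv _, fun a => ?_⟩
  rw [c.s_mono hk]
  simp [eqA_apply]

lemma Gam_piA : c.Gam c.piA := by
  refine ⟨Finsupp.applyAddHom 0, eqA (finRotate n).symm, ones_equiv _, fun a => ?_⟩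
  rw [piA_apply, c.hpiInv, smul_mono, mul_one]
  rfl

lemma Gam_piA_symm : c.Gam c.piA.symm := by
  refine ⟨-((Finsupp.applyAddHom 0).comp (eqA (finRotate n))), eqA (finRotate n),
    ones_equiv _, fun a => ?_⟩
  rw [AlgEquiv.symm_apply_eq, piA_apply, c.hpiInv, smul_mono, ← eqA_apply, eqA_comp,
    ← Equiv.Perm.inv_def, inv_mul_cancel, eqA_one, ← zpow_add₀ c.hq]
  have : (eqA (finRotate n) a) 0
      + (-((Finsupp.applyAddHom 0).comp (eqA (finRotate n)))) a = 0 := by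
    rw [AddMonoidHom.neg_apply]
    exact add_neg_cancel _
  rw [this, zpow_zero]

/-- The functional attached to an automorphism. -/
def ph (σ : Laur F n ≃ₐ[F] Laur F n) : Laur F n →ₗ[F] K F n :=
  (io F n).toLinearMap ∘ₗ σ.toLinearMap

lemma ph_apply (σ : Laur F n ≃ₐ[F] Laur F n) (p : Laur F n) : ph σ p = io F n (σ p) := rfl

/-- The span of monomial automorphisms. -/
def Gs : Submodule (K F n) (Laur F n →ₗ[F] K F n) :=
  Submodule.span (K F n) (Set.range fun σ : {σ // c.Gam σ} => ph σ.1)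

lemma ph_mem {σ : Laur F n ≃ₐ[F] Laur F n} (h : c.Gam σ) : ph σ ∈ c.Gs :=
  Submodule.subset_span ⟨⟨σ, h⟩, rfl⟩

/-- Operators preserving the span. -/
def Stab : Subalgebra F (Module.End F (Laur F n)) where
  carrier := {f | ∀ C ∈ c.Gs, C ∘ₗ f ∈ c.Gs}
  add_mem' := by
    intro f g hf hg
    rw [Set.mem_ofPred_eq] at *
    intro C hC
    rw [LinearMap.comp_add]
    exact add_mem (hf C hC) (hg C hC)
  mul_mem' := by
    intro f g hf hg
    rw [Set.mem_ofPred_eq] at *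
    intro C hC
    exact hg _ (hf C hC)
  algebraMap_mem' := by
    intro r
    rw [Set.mem_ofPred_eq]
    intro C hC
    have : C ∘ₗ (algebraMap F (Module.End F (Laur F n)) r) = (algebraMap F (K F n) r) • C := by
      apply LinearMap.ext
      intro p
      rw [LinearMap.comp_apply, LinearMap.smul_apply, Module.algebraMap_end_apply, map_smul,
        algebraMap_smul]
    rw [this]
    exact Submodule.smul_mem _ _ hC

lemma mem_Stab {f : Module.End F (Laur F n)}
    (h : ∀ σ, c.Gam σ → ph σ ∘ₗ f ∈ c.Gs) : f ∈ c.Stab := by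
  change ∀ C ∈ c.Gs, C ∘ₗ f ∈ c.Gs
  intro C hC
  induction hC using Submodule.span_induction with
  | mem x hx =>
    obtain ⟨σ, rfl⟩ := hx
    exact h σ.1 σ.2
  | zero => rw [LinearMap.zero_comp]; exact zero_mem _
  | add x y _ _ hx hy => rw [LinearMap.add_comp]; exact add_mem hx hy
  | smul r x _ hx => rw [LinearMap.smul_comp]; exact Submodule.smul_mem _ _ hx

lemma Stab_T {k : ℕ} (hk : k + 1 < n) : c.T k ∈ c.Stab := by
  apply c.mem_Stab
  intro σ hσ
  have : ph σ ∘ₗ c.T k = cA c.t (io F n (σ (xx k))) (io F n (σ (xx (k + 1)))) • ph ((c.s k).trans σ)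
      + cB c.t (io F n (σ (xx k))) (io F n (σ (xx (k + 1)))) • ph σ := by
    apply LinearMap.ext
    intro p
    rw [LinearMap.comp_apply, LinearMap.add_apply, LinearMap.smul_apply, LinearMap.smul_apply,
      ph_apply, ph_apply, ph_apply, c.io_T hk]
    rfl
  rw [this]
  exact add_mem (Submodule.smul_mem _ _ (c.ph_mem (c.Gam_trans (c.Gam_s hk) hσ)))
    (Submodule.smul_mem _ _ (c.ph_mem hσ))

lemma Stab_mulOp (x : Laur F n) : mulOp x ∈ c.Stab := by
  apply c.mem_Stab
  intro σ hσ
  have : ph σ ∘ₗ mulOp x = io F n (σ x) • ph σ := by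
    apply LinearMap.ext
    intro p
    rw [LinearMap.comp_apply, LinearMap.smul_apply, ph_apply, ph_apply, mulOp_apply, map_mul,
      map_mul]
    rfl
  rw [this]
  exact Submodule.smul_mem _ _ (c.ph_mem hσ)

lemma Stab_piInv : c.piInv ∈ c.Stab := by
  apply c.mem_Stab
  intro σ hσ
  exact c.ph_mem (c.Gam_trans c.Gam_piA hσ)

lemma Stab_pi : c.pi ∈ c.Stab := by
  apply c.mem_Stab
  intro σ hσ
  have : ph σ ∘ₗ c.pi = ph (c.piA.symm.trans σ) := by
    apply LinearMap.ext
    intro p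
    rw [LinearMap.comp_apply, ph_apply, ph_apply, AlgEquiv.trans_apply, piA_symm_apply]
  rw [this]
  exact c.ph_mem (c.Gam_trans c.Gam_piA_symm hσ)

lemma aF_memS {A : Type*} [Ring A] [Algebra F A] (S : Subalgebra F A) (t : ℕ → A) (s l : ℕ)
    (h : ∀ k, k < s + l → t k ∈ S) : aF t s l ∈ S := by
  induction l with
  | zero => rw [aF_zero']; exact one_mem _
  | succ l ih =>
    rw [aF_succR]
    exact mul_mem (ih fun k hk => h k (by omega)) (h _ (by omega))

lemma dF_memS {A : Type*} [Ring A] [Algebra F A] (S : Subalgebra F A) (t : ℕ → A) (s l : ℕ)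
    (h : ∀ k, k < s + l → t k ∈ S) : dF t s l ∈ S := by
  induction l with
  | zero => rw [dF_zero']; exact one_mem _
  | succ l ih =>
    rw [dF_succL]
    exact mul_mem (h _ (by omega)) (ih fun k hk => h k (by omega))

lemma Stab_Ti {k : ℕ} (hk : k + 1 < n) : c.Ti k ∈ c.Stab := by
  rw [c.hTi]
  exact add_mem (c.Stab_T hk) (Subalgebra.smul_mem _ (one_mem _) _)

lemma Yi_eq {i : ℕ} (hi : i < n) :
    c.Yi i = dF c.T 0 i * c.pi * dF c.Ti i (n - 1 - i) := by
  have h1 := aF_mul_dF c.Ti c.T 0 i (fun k hk => (c.hTinv k (by omega)).2)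
  have h2 := aF_mul_dF c.T c.Ti i (n - 1 - i) (fun k hk => (c.hTinv k (by omega)).1)
  have h3 : c.Y i * (dF c.T 0 i * c.pi * dF c.Ti i (n - 1 - i)) = 1 := by
    rw [c.hY]
    calc _ = aF c.T i (n - 1 - i) * (c.piInv * ((aF c.Ti 0 i * dF c.T 0 i) * c.pi))
          * dF c.Ti i (n - 1 - i) := by simp only [mul_assoc]
      _ = 1 := by rw [h1, one_mul, c.piInv_pi, mul_one, h2]
  calc c.Yi i = c.Yi i * (c.Y i * (dF c.T 0 i * c.pi * dF c.Ti i (n - 1 - i))) := by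
        rw [h3, mul_one]
    _ = _ := by rw [← mul_assoc, (c.hYinv i hi).2, one_mul]

lemma Stab_Y {i : ℕ} (hi : i < n) : c.Y i ∈ c.Stab := by
  rw [c.hY]
  exact mul_mem (mul_mem (aF_memS _ _ _ _ fun k hk => c.Stab_T (by omega)) c.Stab_piInv)
    (aF_memS _ _ _ _ fun k hk => c.Stab_Ti (by omega))

lemma Stab_Yi {i : ℕ} (hi : i < n) : c.Yi i ∈ c.Stab := by
  rw [c.Yi_eq hi]
  exact mul_mem (mul_mem (dF_memS _ _ _ _ fun k hk => c.Stab_T (by omega)) c.Stab_pi)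
    (dF_memS _ _ _ _ fun k hk => c.Stab_Ti (by omega))

lemma Stab_H {g : Module.End F (Laur F n)} (hg : g ∈ c.H) : g ∈ c.Stab := by
  have hn : n - 1 < n := by have := NeZero.pos n; omega
  refine Algebra.adjoin_le (S := c.Stab) ?_ hg
  intro x hx
  rcases hx with ⟨k, hk, rfl⟩ | ⟨i, hi, rfl⟩ | ⟨i, hi, rfl⟩ | ⟨i, j, hi, hj, hij, rfl⟩
  · exact c.Stab_T hk
  · exact c.Stab_Y hi
  · exact c.Stab_Yi hi
  · rw [e, D, XOp_eq hi, XinvOp_eq hn]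
    refine mul_mem (c.Stab_mulOp _) (mul_mem (mul_mem ?_ ?_) ?_)
    · exact aF_memS _ _ _ _ fun k hk => c.Stab_T (by omega)
    · exact Subalgebra.smul_mem _ (mul_mem (c.Stab_mulOp _)
        (sub_mem (c.Stab_Y hn) (c.Stab_Yi hn))) _
    · exact dF_memS _ _ _ _ fun k hk => c.Stab_T (by omega)

/-- The character of an automorphism. -/
def chr (σ : Laur F n ≃ₐ[F] Laur F n) : Multiplicative (Fin n →₀ ℤ) →* K F n where
  toFun a := io F n (σ (mono a.toAdd 1))
  map_one' := by
    rw [toAdd_one, mono_zero_one, map_one, map_one]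
  map_mul' := by
    intro a b
    rw [toAdd_mul, ← map_mul, ← map_mul, mono_mul, one_mul]

lemma chr_inj : Function.Injective (chr : (Laur F n ≃ₐ[F] Laur F n) → _) := by
  intro σ ρ h
  have : σ.toLinearMap = ρ.toLinearMap := by
    apply laur_ext
    intro a
    have := DFunLike.congr_fun h (Multiplicative.ofAdd a)
    exact io_inj this
  ext p
  exact congrArg (fun x : Laur F n => x.coeff _) (LinearMap.congr_fun this _)

lemma deg_smul {n : ℕ} (m : ℤ) (a : Fin n →₀ ℤ) : deg (m • a) = m * deg a := by
  simp [deg, Finset.mul_sum]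

lemma deg_sub {n : ℕ} (a b : Fin n →₀ ℤ) : deg (a - b) = deg a - deg b := by
  simp [deg]

lemma deg_ones : deg (ones n) = n := by
  simp [deg, ones_apply]

/-- A monomial automorphism fixing degree zero monomials is a power of the grading operator. -/
lemma Gam_fix {σ : Laur F n ≃ₐ[F] Laur F n} (hσ : c.Gam σ)
    (h : ∀ a, deg a = 0 → σ (mono a 1) = mono a 1) :
    ∃ k : ℤ, ∀ a, σ (mono a 1) = mono a (c.q ^ (k * deg a)) := by
  obtain ⟨κ, β, h1, h2⟩ := hσ
  have h3 : ∀ a, deg a = 0 → β a = a ∧ κ a = 0 := by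
    intro a ha
    have e := h a ha
    rw [h2] at e
    have := mono_inj (zpow_ne_zero _ c.hq) e
    exact ⟨this.1, c.hqr _ this.2⟩
  refine ⟨κ (Finsupp.single 0 1), fun a => ?_⟩
  have hβ : β a = a := by
    have d0 : deg ((n : ℤ) • a - deg a • ones n) = 0 := by
      rw [deg_sub, deg_smul, deg_smul, deg_ones]; ring
    have := (h3 _ d0).1
    rw [map_sub, map_zsmul, map_zsmul, h1] at this
    have h4 : (n : ℤ) • β a = (n : ℤ) • a := by simpa using this
    exact smul_right_injective _ (by exact_mod_cast NeZero.ne n) h4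
  have hκ : κ a = κ (Finsupp.single 0 1) * deg a := by
    have d0 : deg (a - deg a • Finsupp.single 0 1) = 0 := by
      rw [deg_sub, deg_smul, deg_single]; ring
    have := (h3 _ d0).2
    rw [map_sub, map_zsmul, smul_eq_mul] at this
    linarith
  rw [h2, hβ, hκ]

/-- Structure of elements commuting with all degree zero multipliers. -/
lemma struct {f : Module.End F (Laur F n)} (hf : f ∈ c.H)
    (hc : ∀ a : Fin n →₀ ℤ, deg a = 0 → f * mulOp (mono a 1) = mulOp (mono a 1) * f) :
    ∃ (s : Finset {σ // c.Gam σ}) (g : {σ // c.Gam σ} → K F n) (k : {σ // c.Gam σ} → ℤ),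
      ∀ a, io F n (f (mono a 1)) = ∑ σ ∈ s, g σ * io F n (mono a (c.q ^ (k σ * deg a))) := by
  have h1 : ph AlgEquiv.refl ∘ₗ f ∈ c.Gs := (c.Stab_H hf) _ (c.ph_mem c.Gam_refl)
  obtain ⟨g, hg⟩ := Finsupp.mem_span_range_iff_exists_finsupp.1 h1
  have h2 : ∀ p, io F n (f p) = ∑ σ ∈ g.support, g σ * io F n (σ.1 p) := by
    intro p
    have := LinearMap.congr_fun hg p
    rw [Finsupp.sum, LinearMap.sum_apply] at this
    exact this.symm
  have li : LinearIndependent (K F n)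
      (fun σ : {σ // c.Gam σ} => ((chr σ.1 : Multiplicative (Fin n →₀ ℤ) →* K F n) :
        Multiplicative (Fin n →₀ ℤ) → K F n)) :=
    (linearIndependent_monoidHom (Multiplicative (Fin n →₀ ℤ)) (K F n)).comp
      (fun σ : {σ // c.Gam σ} => chr σ.1) (chr_inj.comp Subtype.val_injective)
  have h3 : ∀ b, deg b = 0 → ∀ σ ∈ g.support, σ.1 (mono b 1) = mono b 1 := by
    intro b hb σ hσ
    have key := (linearIndependent_iff'.1 li) g.support
      (fun σ => g σ * (io F n (σ.1 (mono b 1)) - io F n (mono b 1))) (by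
        funext a
        rw [Finset.sum_apply]
        simp only [Pi.smul_apply, smul_eq_mul]
        change ∑ σ ∈ g.support, g σ * (io F n (σ.1 (mono b 1)) - io F n (mono b 1))
          * io F n (σ.1 (mono a.toAdd 1)) = 0
        have e1 := LinearMap.congr_fun (hc b hb) (mono a.toAdd 1)
        simp only [Module.End.mul_apply, mulOp_apply] at e1
        have e2 := congrArg (io F n) e1
        rw [map_mul (io F n) (mono b 1), h2, h2, Finset.mul_sum, ← sub_eq_zero, ← Finset.sum_sub_distrib] at e2
        rw [← e2]
        apply Finset.sum_congr rfl
        intro σ _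
        rw [map_mul, map_mul]
        ring) σ hσ
    rcases mul_eq_zero.1 key with h | h
    · exact absurd h (Finsupp.mem_support_iff.1 hσ)
    · exact io_inj (sub_eq_zero.1 h)
  have h4 : ∀ σ : {σ // c.Gam σ}, ∃ k : ℤ, σ ∈ g.support →
      ∀ a, σ.1 (mono a 1) = mono a (c.q ^ (k * deg a)) := by
    intro σ
    by_cases hσ : σ ∈ g.support
    · obtain ⟨k, hk⟩ := c.Gam_fix σ.2 (fun a ha => h3 a ha σ hσ)
      exact ⟨k, fun _ => hk⟩
    · exact ⟨0, fun h => absurd h hσ⟩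
  choose k hk using h4
  refine ⟨g.support, g, k, fun a => ?_⟩
  rw [h2]
  apply Finset.sum_congr rfl
  intro σ hσ
  rw [hk σ hσ]

end Cx

namespace Cx

lemma perm_gen {n : ℕ} (S : Submonoid (Equiv.Perm (Fin n)))
    (h : ∀ (k : ℕ) (hk : k + 1 < n), Equiv.swap ⟨k, Nat.lt_of_succ_lt hk⟩ ⟨k + 1, hk⟩ ∈ S)
    (w : Equiv.Perm (Fin n)) : w ∈ S := by
  cases n with
  | zero => rw [Subsingleton.elim w 1]; exact one_mem _
  | succ m =>
    have h1 := Equiv.Perm.mclosure_swap_castSucc_succ m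
    have h2 : (⊤ : Submonoid (Equiv.Perm (Fin (m + 1)))) ≤ S := by
      rw [← h1, Submonoid.closure_le]
      rintro _ ⟨i, rfl⟩
      exact h i.1 (by have := i.2; omega)
    exact h2 (Submonoid.mem_top w)

variable {F : Type*} [Field F] {n : ℕ} [NeZero n] (c : Cx F n)

lemma eqA_inj (w : Equiv.Perm (Fin n)) : Function.Injective (eqA w) := by
  intro a b h
  have := congrArg (eqA w⁻¹) h
  simpa only [eqA_comp, inv_mul_cancel, eqA_one] using this

lemma coeff_mono (a v : Fin n →₀ ℤ) (r : F) [Decidable (a = v)] :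
    (mono a r : Laur F n).coeff v = if a = v then r else 0 := by
  rw [mono, AddMonoidAlgebra.coeff_single, Finsupp.single_apply]

lemma coeff_W (w : Equiv.Perm (Fin n)) (h : Laur F n) (v : Fin n →₀ ℤ) :
    (c.W w h).coeff (eqA w v) = h.coeff v := by
  classical
  induction h using laur_induction with
  | zero => simp
  | add x y hx hy => simp [hx, hy]
  | single a r =>
    rw [c.hW, ← eqA_apply, coeff_mono, coeff_mono]
    simp only [(eqA_inj w).eq_iff]

lemma coeff_pi (h : Laur F n) (v : Fin n →₀ ℤ) :
    (c.piInv h).coeff (eqA (finRotate n).symm v) = c.q ^ (v 0) * h.coeff v := by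
  classical
  induction h using laur_induction with
  | zero => simp
  | add x y hx hy => simp [hx, hy, mul_add]
  | single a r =>
    rw [c.hpiInv, smul_mono, ← eqA_apply, coeff_mono, coeff_mono]
    simp only [(eqA_inj _).eq_iff]
    split_ifs with h
    · rw [h]
    · rw [mul_zero]

lemma const_of_inv (h : Laur F n) (hs : ∀ k, k + 1 < n → c.s k h = h) (hp : c.piInv h = h) :
    ∃ r : F, h = mono 0 r := by
  classical
  have hW : ∀ w, c.W w h = h := by
    intro w
    let S : Submonoid (Equiv.Perm (Fin n)) :=
      { carrier := {w | c.W w h = h}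
        one_mem' := by
          rw [Set.mem_ofPred_eq, W_refl]; rfl
        mul_mem' := by
          intro a b ha hb
          rw [Set.mem_ofPred_eq] at *
          rw [← W_comp, Module.End.mul_apply, hb, ha] }
    have hS : ∀ w, w ∈ S ↔ c.W w h = h := fun w => Iff.rfl
    rw [← hS]
    apply perm_gen
    intro k hk
    rw [hS, ← WA_apply, ← s_of_lt]
    exact hs k hk
  have h1 : ∀ w v, h.coeff (eqA w v) = h.coeff v := by
    intro w v
    have := c.coeff_W w h v
    rwa [hW] at this
  have h2 : ∀ v, h.coeff v ≠ 0 → v 0 = 0 := by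
    intro v hv
    have := c.coeff_pi h v
    rw [hp, h1] at this
    apply c.hqr
    exact (mul_right_cancel₀ hv (by rw [one_mul]; exact this)).symm
  have h3 : ∀ v, h.coeff v ≠ 0 → v = 0 := by
    intro v hv
    ext i
    have h4 := h2 (eqA (Equiv.swap 0 i) v) (by rw [h1]; exact hv)
    rw [eqA_apply, Finsupp.equivMapDomain_apply, Equiv.symm_swap, Equiv.swap_apply_left] at h4
    exact h4
  refine ⟨h.coeff 0, ?_⟩
  apply AddMonoidAlgebra.ext
  ext v
  rw [coeff_mono]
  split_ifs with hv
  · rw [hv]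
  · by_contra hne
    exact hv (h3 v hne).symm

lemma f_s {f : Module.End F (Laur F n)}
    (h0 : ∀ a : Fin n →₀ ℤ, deg a = 0 → ∀ p, f (mono a 1 * p) = mono a 1 * f p) {k : ℕ}
    (hk : k + 1 < n) (hT : ∀ p, f (c.T k p) = c.T k (f p)) (p : Laur F n) :
    f (c.s k p) = c.s k (f p) := by
  have hk' : k < n := by omega
  set R : Laur F n := mono (Finsupp.single ⟨k, hk'⟩ 1 + Finsupp.single ⟨k + 1, hk⟩ (-1)) 1 with hR
  have hxR : xx (k + 1) * R = xx k := by
    rw [hR, xx_of_lt hk, xx_of_lt hk', Xel, Xel, mono_mul, one_mul, add_left_comm,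
      ← Finsupp.single_add, add_neg_cancel, Finsupp.single_zero, add_zero]
  have hfR : ∀ y, f (R * y) = R * f y := h0 _ (by rw [deg_add, deg_single, deg_single]; rfl)
  have E : ∀ y, c.T k y - R * c.T k y
      = c.t⁻¹ • c.s k y - c.t • (R * c.s k y) + (c.t - c.t⁻¹) • y := by
    intro y
    apply mul_left_cancel₀ (xx_ne_zero (F := F) (n := n) (k + 1))
    have h := c.hT' hk y
    rw [← hxR] at h
    simp only [Algebra.smul_def] at h ⊢
    linear_combination h
  have E1 := congrArg f (E p)
  rw [map_sub, hfR, map_add, map_sub, map_smul, map_smul, map_smul, hfR, hT, E (f p)] at E1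
  have E2 : (c.t⁻¹ • (1 : Laur F n) - c.t • R) * (c.s k (f p) - f (c.s k p)) = 0 := by
    simp only [Algebra.smul_def] at E1 ⊢
    linear_combination E1
  rcases mul_eq_zero.1 E2 with h | h
  · exfalso
    apply comb_ne_zero (F := F) (n := n) hk hk' (by omega) c.t⁻¹ c.t (inv_ne_zero c.ht)
    rw [← hxR]
    have := congrArg (fun y => xx (k + 1) * y) h
    simp only [Algebra.smul_def] at this ⊢
    linear_combination this
  · exact (sub_eq_zero.1 h).symm

lemma piInv_mem : c.piInv ∈ c.H := by
  have h1 := dF_mul_aF c.Ti c.T 0 (n - 1) (fun k hk => (c.hTinv k (by omega)).2)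
  have h2 : c.piInv = dF c.Ti 0 (n - 1) * c.Y 0 := by
    rw [Y_zero, ← mul_assoc, h1, one_mul]
  rw [h2]
  refine mul_mem (dF_memS _ _ _ _ fun k hk => ?_)
    (Algebra.subset_adjoin (Or.inr (Or.inl ⟨_, NeZero.pos n, rfl⟩)))
  rw [c.hTi]
  exact add_mem (Algebra.subset_adjoin (Or.inl ⟨k, by omega, rfl⟩))
    (Subalgebra.smul_mem _ (one_mem _) _)

lemma hard {f : Module.End F (Laur F n)} (hf : f ∈ c.H)
    (hc : ∀ g ∈ c.H, f * g = g * f) : f ∈ Submodule.span F (Set.range c.Yz) := by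
  have h0' := c.central_deg0 hf hc
  have h0 : ∀ a : Fin n →₀ ℤ, deg a = 0 → ∀ p, f (mono a 1 * p) = mono a 1 * f p :=
    fun a ha p => LinearMap.congr_fun (h0' a ha) p
  have hs : ∀ k, k + 1 < n → ∀ p, f (c.s k p) = c.s k (f p) := fun k hk p =>
    c.f_s h0 hk (fun p => LinearMap.congr_fun
      (hc _ (Algebra.subset_adjoin (Or.inl ⟨k, hk, rfl⟩))) p) p
  have hp : ∀ p, f (c.piInv p) = c.piInv (f p) := fun p =>
    LinearMap.congr_fun (hc _ c.piInv_mem) p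
  have hh : ∀ d : ℤ, ∃ h : Laur F n, ∀ a, deg a = d → f (mono a 1) = h * mono a 1 := by
    intro d
    refine ⟨f (mono (Finsupp.single 0 d) 1) * mono (Finsupp.single 0 (-d)) 1, fun a ha => ?_⟩
    have e1 : (mono a 1 : Laur F n)
        = mono (a + Finsupp.single 0 (-d)) 1 * mono (Finsupp.single 0 d) 1 := by
      rw [mono_mul, one_mul, add_assoc, ← Finsupp.single_add, neg_add_cancel, Finsupp.single_zero,
        add_zero]
    have e2 := h0 (a + Finsupp.single 0 (-d)) (by rw [deg_add, deg_single, ha, add_neg_cancel])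
      (mono (Finsupp.single 0 d) 1)
    rw [← e1] at e2
    rw [e2, mul_assoc, mono_mul, one_mul, mul_comm, add_comm]
  have hconst : ∀ d : ℤ, ∃ r : F, ∀ a : Fin n →₀ ℤ, deg a = d → f (mono a 1) = r • mono a 1 := by
    intro d
    obtain ⟨h, hd⟩ := hh d
    have ha : deg (Finsupp.single (0 : Fin n) d) = d := deg_single _ _
    obtain ⟨r, hr⟩ := c.const_of_inv h (by
        intro k hk
        have e1 := hs k hk (mono (Finsupp.single 0 d) 1)
        rw [c.s_mono hk, hd _ (by rw [deg_equiv, ha]), hd _ ha, map_mul, c.s_mono hk] at e1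
        exact (mul_right_cancel₀ (mono_ne_zero _ _ one_ne_zero) e1).symm) (by
        have e1 := hp (mono (Finsupp.single 0 d) 1)
        rw [c.hpiInv, map_smul, hd _ (by rw [deg_equiv, ha]), hd _ ha, c.pi_mul, c.hpiInv,
          mul_smul_comm] at e1
        have e2 := smul_right_injective _ (zpow_ne_zero _ c.hq) e1
        exact (mul_right_cancel₀ (mono_ne_zero _ _ one_ne_zero) e2).symm)
    refine ⟨r, fun a ha => ?_⟩
    rw [hd a ha, hr, mono_mul, zero_add, mul_one, ← mono_eq_smul]
  choose r hr using hconst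
  obtain ⟨s, g, k, hst⟩ := c.struct hf h0'
  obtain ⟨ρ, hρ⟩ := LinearMap.exists_leftInverse_of_injective (Algebra.linearMap F (K F n))
    (LinearMap.ker_eq_bot.2 (algebraMap F (K F n)).injective)
  have hρ' : ∀ x : F, ρ (algebraMap F (K F n) x) = x := fun x => LinearMap.congr_fun hρ x
  have hfin : f = ∑ σ ∈ s, ρ (g σ) • c.Yz (k σ) := by
    apply laur_ext
    intro a
    have e1 := hst a
    rw [hr _ a rfl, map_smul] at e1
    have e2 : algebraMap F (K F n) (r (deg a)) = ∑ σ ∈ s, c.q ^ (k σ * deg a) • g σ := by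
      have hne : io F n (mono a 1) ≠ 0 := fun h =>
        mono_ne_zero (F := F) a 1 one_ne_zero ((map_eq_zero_iff _ io_inj).1 h)
      apply mul_right_cancel₀ hne
      rw [← Algebra.smul_def, e1, Finset.sum_mul]
      apply Finset.sum_congr rfl
      intro σ _
      rw [mono_eq_smul a (c.q ^ _), map_smul, mul_smul_comm, smul_mul_assoc]
    have e3 := congrArg ρ e2
    rw [hρ', map_sum] at e3
    rw [hr _ a rfl, e3, Finset.sum_smul, LinearMap.sum_apply]
    apply Finset.sum_congr rfl
    intro σ _
    rw [LinearMap.smul_apply, c.Yz_mono, map_smul, smul_smul, smul_eq_mul, mul_comm]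
  rw [hfin]
  exact Submodule.sum_mem _ fun σ _ => Submodule.smul_mem _ _ (Submodule.subset_span ⟨_, rfl⟩)

theorem main : ∀ f ∈ c.H, ((∀ g ∈ c.H, f * g = g * f) ↔
    f ∈ Submodule.span F (Set.range c.Yz)) :=
  fun _ hf => ⟨fun h => c.hard hf h, fun h _ hg => c.easy h hg⟩

end Cx

/-- Over the field `F = ℂ(τ)` (realised as `RatFunc ℂ`, with `τ = X`),
the centre of `ℍ^{gl_n}`: an element `f ∈ ℍ^{gl_n}` commutes with every element of
`ℍ^{gl_n}` iff `f` is an `F`-linear combination of the powers `Ỹ^m`, `m ∈ ℤ`, of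
`Ỹ = Y_1 ⋯ Y_n`. -/
theorem statement12
    (n : ℕ) [NeZero n]
    (q₀ : ℂ) (hq₀ : q₀ ≠ 0) (hq₀root : ∀ m : ℕ, m ≠ 0 → q₀ ^ m ≠ 1)
    -- the action of the symmetric group permuting the variables
    (W : Equiv.Perm (Fin n) → Module.End (RatFunc ℂ) (Laur (RatFunc ℂ) n))
    (hW : ∀ (w : Equiv.Perm (Fin n)) (v : Fin n →₀ ℤ) (r : (RatFunc ℂ)),
      W w (mono v r) = mono (Finsupp.equivMapDomain w v) r)
    -- the Demazure–Lusztig operators `T_k` and their inverses `Ti k = T k + τ⁻¹ - τ`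
    (T Ti : ℕ → Module.End (RatFunc ℂ) (Laur (RatFunc ℂ) n))
    (hT : ∀ (k : ℕ) (hk : k + 1 < n) (p : Laur (RatFunc ℂ) n),
      (Xel ⟨k + 1, hk⟩ - Xel ⟨k, Nat.lt_of_succ_lt hk⟩) * T k p
        = ((RatFunc.X : RatFunc ℂ)⁻¹ • Xel ⟨k + 1, hk⟩ - (RatFunc.X : RatFunc ℂ) • Xel ⟨k, Nat.lt_of_succ_lt hk⟩)
            * W (Equiv.swap ⟨k, Nat.lt_of_succ_lt hk⟩ ⟨k + 1, hk⟩) p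
          + ((RatFunc.X : RatFunc ℂ) - (RatFunc.X : RatFunc ℂ)⁻¹) • (Xel ⟨k + 1, hk⟩ * p))
    (hTi : ∀ k, Ti k = T k + ((RatFunc.X : RatFunc ℂ)⁻¹ - (RatFunc.X : RatFunc ℂ)) • (1 : Module.End (RatFunc ℂ) (Laur (RatFunc ℂ) n)))
    (hTinv : ∀ k, k + 1 < n → T k * Ti k = 1 ∧ Ti k * T k = 1)
    -- the operator `π⁻¹`
    (piInv : Module.End (RatFunc ℂ) (Laur (RatFunc ℂ) n))
    (hpiInv : ∀ (v : Fin n →₀ ℤ) (r : (RatFunc ℂ)),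
      piInv (mono v r)
        = (algebraMap ℂ (RatFunc ℂ) q₀) ^ (v 0) • mono (Finsupp.equivMapDomain (finRotate n).symm v) r)
    -- the operators `Y_i = T_i ⋯ T_{n-1} ⬝ π⁻¹ ⬝ T_1⁻¹ ⋯ T_{i-1}⁻¹` and their inverses
    (Y Yi : ℕ → Module.End (RatFunc ℂ) (Laur (RatFunc ℂ) n))
    (hY : ∀ i, Y i = aF T i (n - 1 - i) * piInv * aF Ti 0 i)
    (hYinv : ∀ i, i < n → Y i * Yi i = 1 ∧ Yi i * Y i = 1)
    -- the `q`-Dunkl-type operators `D_i`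
    (D : ℕ → Module.End (RatFunc ℂ) (Laur (RatFunc ℂ) n))
    (hD : ∀ i, D i = aF T i (n - 1 - i)
        * (((algebraMap ℂ (RatFunc ℂ) q₀) - (algebraMap ℂ (RatFunc ℂ) q₀)⁻¹)⁻¹ • (XinvOp (n - 1) * (Y (n - 1) - Yi (n - 1))))
        * dF T i (n - 1 - i))
    -- the operators `e_{ij} = X_i · D_j`
    (e : ℕ → ℕ → Module.End (RatFunc ℂ) (Laur (RatFunc ℂ) n))
    (he : ∀ i j, e i j = XOp i * D j)
    :
    ∀ f ∈ Algebra.adjoin (RatFunc ℂ) (HglSet T Y Yi e),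
      ((∀ g ∈ Algebra.adjoin (RatFunc ℂ) (HglSet T Y Yi e), f * g = g * f) ↔
        f ∈ Submodule.span (RatFunc ℂ) (Set.range fun m : ℤ =>
              zpowOp (((List.range n).map Y).prod)
                ((((List.range n).map Yi).reverse).prod) m)) := by
  have hq' : algebraMap ℂ (RatFunc ℂ) q₀ ≠ 0 :=
    (map_ne_zero_iff _ (algebraMap ℂ (RatFunc ℂ)).injective).2 hq₀
  have hqn : ∀ m : ℕ, algebraMap ℂ (RatFunc ℂ) q₀ ^ m = 1 → m = 0 := by
    intro m hm
    by_contra hne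
    apply hq₀root m hne
    apply (algebraMap ℂ (RatFunc ℂ)).injective
    rw [map_pow, hm, map_one]
  have hqr : ∀ m : ℤ, algebraMap ℂ (RatFunc ℂ) q₀ ^ m = 1 → m = 0 := by
    intro m hm
    rcases Int.eq_nat_or_neg m with ⟨j, rfl | rfl⟩
    · rw [zpow_natCast] at hm
      rw [hqn j hm]; rfl
    · rw [zpow_neg, inv_eq_one, zpow_natCast] at hm
      rw [hqn j hm]; rfl
  let c : Cx (RatFunc ℂ) n :=
    { q := algebraMap ℂ (RatFunc ℂ) q₀
      t := RatFunc.X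
      hq := hq'
      hqr := hqr
      ht := RatFunc.X_ne_zero
      W := W
      hW := hW
      T := T
      Ti := Ti
      hT := hT
      hTi := hTi
      hTinv := hTinv
      piInv := piInv
      hpiInv := hpiInv
      Y := Y
      Yi := Yi
      hY := hY
      hYinv := hYinv }
  have hD' : D = c.D := funext fun i => hD i
  have he' : e = c.e := by
    funext i j
    rw [he, hD']
    rfl
  rw [he']
  exact c.main
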